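/- arXiv:1507.00445 — 6 statements merged into one kernel-verified Lean document; each statement's English description precedes it below -/
import Mathlib

section
/- Fix real constants b, k₁, k₂, k₃, k₄ > 0. Every eigenvalue λ of the dissipative Timoshenko boundary-feedback problem satisfies −(k₂ + k₄) ≤ Re(λ) < 0. -/
open Set

/-- `lam` is an eigenvalue of the dissipative Timoshenko boundary-feedback problem
(case `a = 1`) with constants `b, k₁, k₂, k₃, k₄`. -/
def IsDissipativeEigenvalue (b k₁ k₂ k₃ k₄ : ℝ) (lam : ℂ) : Prop :=
  ∃ u y : ℝ → ℂ,
    ContDiff ℝ 2 u ∧ ContDiff ℝ 2 y ∧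
    ¬ (∀ x ∈ Icc (0:ℝ) 1, u x = 0 ∧ y x = 0) ∧
    (∀ x ∈ Icc (0:ℝ) 1, deriv (deriv u) x + deriv y x - lam ^ 2 * u x = 0) ∧
    (∀ x ∈ Icc (0:ℝ) 1,
      deriv (deriv y) x - (b : ℂ) * deriv u x - (b : ℂ) * y x - lam ^ 2 * y x = 0) ∧
    u 0 = 0 ∧ y 0 = 0 ∧
    lam ^ 2 * u 1 + (k₁ : ℂ) * (deriv u 1 + y 1) + (k₂ : ℂ) * lam * u 1 = 0 ∧
    lam ^ 2 * y 1 + (k₃ : ℂ) * deriv y 1 + (k₄ : ℂ) * lam * y 1 = 0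

/-!
In terms of the shear `w = u' + y` and the bending strain `v = y'` the equations read `w' = λ²u`,
`v' = b w + λ²y`. Testing them against `(b u, y)` on `[0, 1]` and inserting the boundary conditions
shows that `λ` is a root of a real quadratic `m z² + d z + k` whose coefficients are the inertia
(interior and boundary), the boundary damping and the strain energy of the mode. Multiplying this
quadratic by the conjugate of `λ` and taking real parts gives `Re λ · (m|λ|² + k) = -d|λ|²`.
The bounds follow because `0 < d ≤ max k₂ k₄ · m` and `λ ≠ 0`. Here `d > 0` is the absence of
imaginary eigenvalues: a mode without boundary damping has vanishing Cauchy data at `1`, hence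
vanishes.
-/

open scoped ComplexConjugate

section RealQuadratic

variable {m d k : ℝ} {z : ℂ}

lemma re_mul_eq_neg_of_real_quadratic (h : m * z ^ 2 + d * z + k = 0) :
    z.re * (m * ‖z‖ ^ 2 + k) = -d * ‖z‖ ^ 2 := by
  have hconj : z * conj z = (‖z‖ : ℂ) ^ 2 := Complex.mul_conj' z
  have hz : ((m * ‖z‖ ^ 2 : ℝ) : ℂ) * z + ((d * ‖z‖ ^ 2 : ℝ) : ℂ) + (k : ℂ) * conj z = 0 := by
    push_cast
    linear_combination conj z * h - (m * z + d) * hconj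
  have hre := congrArg Complex.re hz
  simp only [Complex.add_re, Complex.re_ofReal_mul, Complex.ofReal_re, Complex.conj_re,
    Complex.zero_re] at hre
  linear_combination hre

lemma re_lt_zero_of_real_quadratic (hm : 0 < m) (hd : 0 < d) (hk : 0 ≤ k) (hz : z ≠ 0)
    (h : m * z ^ 2 + d * z + k = 0) : z.re < 0 := by
  have hprod : z.re * (m * ‖z‖ ^ 2 + k) < 0 := by
    rw [re_mul_eq_neg_of_real_quadratic h, neg_mul]
    exact neg_neg_of_pos (by positivity)
  exact neg_of_mul_neg_left hprod (by positivity)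

lemma neg_le_re_of_real_quadratic {κ : ℝ} (hm : 0 < m) (hdm : d ≤ κ * m) (hk : 0 ≤ k)
    (hκ : 0 ≤ κ) (h : m * z ^ 2 + d * z + k = 0) : -κ ≤ z.re := by
  rcases eq_or_ne z 0 with rfl | hz
  · simpa using hκ
  have hpos : 0 < m * ‖z‖ ^ 2 + k := by positivity
  refine le_of_mul_le_mul_right ?_ hpos
  calc -κ * (m * ‖z‖ ^ 2 + k) = -(κ * m * ‖z‖ ^ 2) - κ * k := by ring
    _ ≤ -(d * ‖z‖ ^ 2) - 0 := by gcongr; positivity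
    _ = z.re * (m * ‖z‖ ^ 2 + k) := by rw [re_mul_eq_neg_of_real_quadratic h]; ring

end RealQuadratic

section Uniqueness

variable {E : Type*} [NormedAddCommGroup E] [NormedSpace ℝ E] {f : ℝ → E}

lemma eqOn_zero_of_hasDerivAt_zero {s : Set ℝ} {x₀ : ℝ} (hs : Convex ℝ s)
    (hf : ∀ x ∈ s, HasDerivAt f 0 x) (hx₀ : x₀ ∈ s) (h₀ : f x₀ = 0) : ∀ x ∈ s, f x = 0 := by
  intro x hx
  have hle := hs.norm_image_sub_le_of_norm_hasDerivWithin_le (C := 0)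
    (fun t ht => (hf t ht).hasDerivWithinAt) (fun _ _ => norm_zero.le) hx₀ hx
  simpa [h₀] using hle

lemma eqOn_zero_of_hasDerivAt_lipschitz {F : E → E} {K : NNReal} {a c : ℝ}
    (hF : LipschitzWith K F) (hF₀ : F 0 = 0) (hf : ∀ x ∈ Icc a c, HasDerivAt f (F (f x)) x)
    (hc : f c = 0) : ∀ x ∈ Icc a c, f x = 0 :=
  ODE_solution_unique_of_mem_Icc_left (v := fun _ => F) (s := fun _ => univ) (g := fun _ => 0)
    (fun _ _ => hF.lipschitzOnWith)
    (fun x hx => (hf x hx).continuousAt.continuousWithinAt)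
    (fun x hx => (hf x (Ioc_subset_Icc_self hx)).hasDerivWithinAt)
    (fun _ _ => mem_univ _) continuousOn_const
    (fun x _ => by simpa [hF₀] using hasDerivWithinAt_const x (Iic x) (0 : E))
    (fun _ _ => mem_univ _) hc

end Uniqueness

/-- The Timoshenko system `u'' + y' = μ u`, `y'' - b (u' + y) = μ y` on `s`, written as a
first-order system by means of the shear `w = u' + y` and the bending strain `v = y'`. -/
structure IsTimoshenkoSolution (b : ℝ) (μ : ℂ) (s : Set ℝ) (u y w v : ℝ → ℂ) : Prop where
  hasDerivAt_u : ∀ x ∈ s, HasDerivAt u (w x - y x) x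
  hasDerivAt_y : ∀ x ∈ s, HasDerivAt y (v x) x
  hasDerivAt_w : ∀ x ∈ s, HasDerivAt w (μ * u x) x
  hasDerivAt_v : ∀ x ∈ s, HasDerivAt v (b * w x + μ * y x) x

/-- The weighted energy `∫ (b |f|² + |g|²)` over `[a, c]`: the strain energy of a Timoshenko
solution for `(f, g) = (w, v)`, and its inertia for `(f, g) = (u, y)`. -/
noncomputable def timoshenkoEnergy (b a c : ℝ) (f g : ℝ → ℂ) : ℝ :=
  ∫ x in a..c, (b * ‖f x‖ ^ 2 + ‖g x‖ ^ 2)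

lemma timoshenkoEnergy_nonneg {b a c : ℝ} (hb : 0 ≤ b) (hac : a ≤ c) (f g : ℝ → ℂ) :
    0 ≤ timoshenkoEnergy b a c f g :=
  intervalIntegral.integral_nonneg hac fun _ _ => by positivity

namespace IsTimoshenkoSolution

variable {b a c : ℝ} {μ : ℂ} {s : Set ℝ} {u y w v : ℝ → ℂ}

lemma hasDerivAt_flux (h : IsTimoshenkoSolution b μ s u y w v) {x : ℝ} (hx : x ∈ s) :
    HasDerivAt (fun t => b * w t * conj (u t) + v t * conj (y t))
      (((b * ‖w x‖ ^ 2 + ‖v x‖ ^ 2 : ℝ) : ℂ) + μ * ((b * ‖u x‖ ^ 2 + ‖y x‖ ^ 2 : ℝ) : ℂ)) x := by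
  have hderiv := (((h.hasDerivAt_w x hx).const_mul (b : ℂ)).mul (h.hasDerivAt_u x hx).star).add
    ((h.hasDerivAt_v x hx).mul (h.hasDerivAt_y x hx).star)
  refine hderiv.congr_deriv ?_
  push_cast
  simp only [← Complex.mul_conj', Complex.star_def, map_sub]
  ring

lemma energy_identity (h : IsTimoshenkoSolution b μ (uIcc a c) u y w v) :
    (timoshenkoEnergy b a c w v : ℂ) + μ * timoshenkoEnergy b a c u y =
      (b * w c * conj (u c) + v c * conj (y c)) - (b * w a * conj (u a) + v a * conj (y a)) := by
  have hu : ContinuousOn u (uIcc a c) := HasDerivAt.continuousOn h.hasDerivAt_u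
  have hy : ContinuousOn y (uIcc a c) := HasDerivAt.continuousOn h.hasDerivAt_y
  have hw : ContinuousOn w (uIcc a c) := HasDerivAt.continuousOn h.hasDerivAt_w
  have hv : ContinuousOn v (uIcc a c) := HasDerivAt.continuousOn h.hasDerivAt_v
  have hstrain : ContinuousOn (fun x => ((b * ‖w x‖ ^ 2 + ‖v x‖ ^ 2 : ℝ) : ℂ)) (uIcc a c) := by
    fun_prop
  have hinertia : ContinuousOn (fun x => μ * ((b * ‖u x‖ ^ 2 + ‖y x‖ ^ 2 : ℝ) : ℂ))
      (uIcc a c) := by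
    fun_prop
  rw [← intervalIntegral.integral_eq_sub_of_hasDerivAt (fun x hx => h.hasDerivAt_flux hx)
      (hstrain.add hinertia).intervalIntegrable,
    intervalIntegral.integral_add hstrain.intervalIntegrable hinertia.intervalIntegrable,
    intervalIntegral.integral_const_mul, intervalIntegral.integral_ofReal,
    intervalIntegral.integral_ofReal]
  rfl

lemma eq_zero_of_right (h : IsTimoshenkoSolution b μ (Icc a c) u y w v)
    (hu : u c = 0) (hy : y c = 0) (hw : w c = 0) (hv : v c = 0) :
    ∀ x ∈ Icc a c, u x = 0 ∧ y x = 0 := by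
  let A : Matrix (Fin 4) (Fin 4) ℂ := !![0, -1, 1, 0; 0, 0, 0, 1; μ, 0, 0, 0; 0, μ, b, 0]
  let T := (Matrix.toLin' A).toContinuousLinearMap
  let state : ℝ → Fin 4 → ℂ := fun x => ![u x, y x, w x, v x]
  have hstate : ∀ x ∈ Icc a c, HasDerivAt state (T (state x)) x := by
    intro x hx
    refine hasDerivAt_pi.2 fun i => ?_
    fin_cases i
    · exact (h.hasDerivAt_u x hx).congr_deriv (by simp [T, A, state, Matrix.mulVec]; ring)
    · exact (h.hasDerivAt_y x hx).congr_deriv (by simp [T, A, state, Matrix.mulVec])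
    · exact (h.hasDerivAt_w x hx).congr_deriv (by simp [T, A, state, Matrix.mulVec])
    · exact (h.hasDerivAt_v x hx).congr_deriv (by simp [T, A, state, Matrix.mulVec]; ring)
  have hzero := eqOn_zero_of_hasDerivAt_lipschitz T.lipschitz (map_zero T) hstate
    (by simp [state, hu, hy, hw, hv])
  exact fun x hx => ⟨congrFun (hzero x hx) 0, congrFun (hzero x hx) 1⟩

lemma eq_zero_of_static {x₀ x₁ : ℝ} (h : IsTimoshenkoSolution b 0 s u y w v)
    (hs : Convex ℝ s) (hx₀ : x₀ ∈ s) (hx₁ : x₁ ∈ s)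
    (hu : u x₀ = 0) (hy : y x₀ = 0) (hw : w x₁ = 0) (hv : v x₁ = 0) :
    ∀ x ∈ s, u x = 0 ∧ y x = 0 := by
  have w_zero : ∀ x ∈ s, w x = 0 := eqOn_zero_of_hasDerivAt_zero hs
    (fun x hx => (h.hasDerivAt_w x hx).congr_deriv (by simp)) hx₁ hw
  have v_zero : ∀ x ∈ s, v x = 0 := eqOn_zero_of_hasDerivAt_zero hs
    (fun x hx => (h.hasDerivAt_v x hx).congr_deriv (by simp [w_zero x hx])) hx₁ hv
  have y_zero : ∀ x ∈ s, y x = 0 := eqOn_zero_of_hasDerivAt_zero hs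
    (fun x hx => (h.hasDerivAt_y x hx).congr_deriv (v_zero x hx)) hx₀ hy
  have u_zero : ∀ x ∈ s, u x = 0 := eqOn_zero_of_hasDerivAt_zero hs
    (fun x hx => (h.hasDerivAt_u x hx).congr_deriv (by simp [w_zero x hx, y_zero x hx])) hx₀ hu
  exact fun x hx => ⟨u_zero x hx, y_zero x hx⟩

end IsTimoshenkoSolution

/-- An eigenmode of the dissipative Timoshenko boundary-feedback problem with eigenvalue `lam`,
in the first-order variables of `IsTimoshenkoSolution`. -/
structure IsTimoshenkoMode (b k₁ k₂ k₃ k₄ : ℝ) (lam : ℂ) (u y w v : ℝ → ℂ) : Prop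
    extends IsTimoshenkoSolution b (lam ^ 2) (Icc 0 1) u y w v where
  nontrivial : ¬ ∀ x ∈ Icc (0 : ℝ) 1, u x = 0 ∧ y x = 0
  u_zero : u 0 = 0
  y_zero : y 0 = 0
  shear_one : lam ^ 2 * u 1 + k₁ * w 1 + k₂ * lam * u 1 = 0
  bending_one : lam ^ 2 * y 1 + k₃ * v 1 + k₄ * lam * y 1 = 0

lemma IsDissipativeEigenvalue.exists_mode {b k₁ k₂ k₃ k₄ : ℝ} {lam : ℂ}
    (h : IsDissipativeEigenvalue b k₁ k₂ k₃ k₄ lam) :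
    ∃ u y w v, IsTimoshenkoMode b k₁ k₂ k₃ k₄ lam u y w v := by
  obtain ⟨u, y, hu, hy, hne, hshear, hbending, hu₀, hy₀, hu₁, hy₁⟩ := h
  have hasDerivAt_deriv {f : ℝ → ℂ} (hf : ContDiff ℝ 2 f) (x : ℝ) :
      HasDerivAt f (deriv f x) x :=
    (hf.differentiable two_ne_zero x).hasDerivAt
  have hasDerivAt_deriv_deriv {f : ℝ → ℂ} (hf : ContDiff ℝ 2 f) (x : ℝ) :
      HasDerivAt (deriv f) (deriv (deriv f) x) x :=
    (hf.differentiable_deriv_two x).hasDerivAt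
  refine ⟨u, y, fun x => deriv u x + y x, deriv y, ⟨?_, ?_, ?_, ?_⟩, hne, hu₀, hy₀, hu₁, hy₁⟩
  · exact fun x _ => (hasDerivAt_deriv hu x).congr_deriv (by ring)
  · exact fun x _ => hasDerivAt_deriv hy x
  · exact fun x hx => ((hasDerivAt_deriv_deriv hu x).add (hasDerivAt_deriv hy x)).congr_deriv
      (by linear_combination hshear x hx)
  · exact fun x hx => (hasDerivAt_deriv_deriv hy x).congr_deriv
      (by linear_combination hbending x hx)

/-- The damping coefficient of the quadratic satisfied by the eigenvalue of a mode; it depends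
only on the boundary values `U = u 1` and `Y = y 1`. -/
noncomputable def boundaryDamping (b k₁ k₂ k₃ k₄ : ℝ) (U Y : ℂ) : ℝ :=
  b * k₂ * k₃ * ‖U‖ ^ 2 + k₁ * k₄ * ‖Y‖ ^ 2

/-- The inertia coefficient of the quadratic satisfied by the eigenvalue of a mode: the inertia of
the beam plus that of its end, scaled by `k₁ k₃` so that no division occurs. -/
noncomputable def totalInertia (b k₁ k₃ : ℝ) (u y : ℝ → ℂ) : ℝ :=
  k₁ * k₃ * timoshenkoEnergy b 0 1 u y + (b * k₃ * ‖u 1‖ ^ 2 + k₁ * ‖y 1‖ ^ 2)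

lemma weighted_norm_sq_add_pos {E : Type*} [NormedAddCommGroup E] {p q : ℝ} {U Y : E}
    (hp : 0 < p) (hq : 0 < q) (h : U ≠ 0 ∨ Y ≠ 0) : 0 < p * ‖U‖ ^ 2 + q * ‖Y‖ ^ 2 := by
  rcases h with hU | hY <;> positivity

lemma boundaryDamping_le_max_mul_totalInertia {b k₁ k₂ k₃ k₄ : ℝ} (hb : 0 ≤ b) (hk₁ : 0 ≤ k₁)
    (hk₃ : 0 ≤ k₃) (hmax : 0 ≤ max k₂ k₄) (u y : ℝ → ℂ) :
    boundaryDamping b k₁ k₂ k₃ k₄ (u 1) (y 1) ≤ max k₂ k₄ * totalInertia b k₁ k₃ u y := by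
  have hinterior : 0 ≤ max k₂ k₄ * (k₁ * k₃ * timoshenkoEnergy b 0 1 u y) :=
    mul_nonneg hmax (mul_nonneg (by positivity) (timoshenkoEnergy_nonneg hb zero_le_one u y))
  calc boundaryDamping b k₁ k₂ k₃ k₄ (u 1) (y 1)
      = k₂ * (b * k₃ * ‖u 1‖ ^ 2) + k₄ * (k₁ * ‖y 1‖ ^ 2) := by rw [boundaryDamping]; ring
    _ ≤ max k₂ k₄ * (b * k₃ * ‖u 1‖ ^ 2) + max k₂ k₄ * (k₁ * ‖y 1‖ ^ 2) := by
        gcongr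
        exacts [le_max_left .., le_max_right ..]
    _ ≤ max k₂ k₄ * totalInertia b k₁ k₃ u y := by rw [totalInertia]; linarith

namespace IsTimoshenkoMode

variable {b k₁ k₂ k₃ k₄ : ℝ} {lam : ℂ} {u y w v : ℝ → ℂ}

lemma eigenvalue_quadratic (h : IsTimoshenkoMode b k₁ k₂ k₃ k₄ lam u y w v) :
    totalInertia b k₁ k₃ u y * lam ^ 2 + boundaryDamping b k₁ k₂ k₃ k₄ (u 1) (y 1) * lam
      + ((k₁ * k₃ * timoshenkoEnergy b 0 1 w v : ℝ) : ℂ) = 0 := by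
  have hsol : IsTimoshenkoSolution b (lam ^ 2) (uIcc 0 1) u y w v := by
    rw [uIcc_of_le zero_le_one]
    exact h.toIsTimoshenkoSolution
  have henergy := hsol.energy_identity
  simp only [h.u_zero, h.y_zero, map_zero, mul_zero, add_zero, sub_zero] at henergy
  rw [totalInertia, boundaryDamping]
  push_cast
  rw [← Complex.mul_conj' (u 1), ← Complex.mul_conj' (y 1)]
  linear_combination k₁ * k₃ * henergy + b * k₃ * conj (u 1) * h.shear_one
    + k₁ * conj (y 1) * h.bending_one

lemma eigenvalue_ne_zero (h : IsTimoshenkoMode b k₁ k₂ k₃ k₄ lam u y w v) (hk₁ : k₁ ≠ 0)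
    (hk₃ : k₃ ≠ 0) : lam ≠ 0 := by
  rintro rfl
  have hsol : IsTimoshenkoSolution b 0 (Icc 0 1) u y w v := by
    simpa using h.toIsTimoshenkoSolution
  have hw : w 1 = 0 := by simpa [hk₁] using h.shear_one
  have hv : v 1 = 0 := by simpa [hk₃] using h.bending_one
  exact h.nontrivial <| hsol.eq_zero_of_static (convex_Icc 0 1) (left_mem_Icc.2 zero_le_one)
    (right_mem_Icc.2 zero_le_one) h.u_zero h.y_zero hw hv

lemma endpoint_ne_zero (h : IsTimoshenkoMode b k₁ k₂ k₃ k₄ lam u y w v) (hk₁ : k₁ ≠ 0)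
    (hk₃ : k₃ ≠ 0) : u 1 ≠ 0 ∨ y 1 ≠ 0 := by
  by_contra! hzero
  obtain ⟨hu, hy⟩ := hzero
  have hw : w 1 = 0 := by simpa [hk₁, hu] using h.shear_one
  have hv : v 1 = 0 := by simpa [hk₃, hy] using h.bending_one
  exact h.nontrivial (h.toIsTimoshenkoSolution.eq_zero_of_right hu hy hw hv)

lemma totalInertia_pos (h : IsTimoshenkoMode b k₁ k₂ k₃ k₄ lam u y w v) (hb : 0 < b)
    (hk₁ : 0 < k₁) (hk₃ : 0 < k₃) : 0 < totalInertia b k₁ k₃ u y :=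
  add_pos_of_nonneg_of_pos
    (mul_nonneg (by positivity) (timoshenkoEnergy_nonneg hb.le zero_le_one u y))
    (weighted_norm_sq_add_pos (by positivity) hk₁ (h.endpoint_ne_zero hk₁.ne' hk₃.ne'))

theorem eigenvalue_re_lt_zero (h : IsTimoshenkoMode b k₁ k₂ k₃ k₄ lam u y w v) (hb : 0 < b)
    (hk₁ : 0 < k₁) (hk₂ : 0 < k₂) (hk₃ : 0 < k₃) (hk₄ : 0 < k₄) : lam.re < 0 := by
  have hdamping : 0 < boundaryDamping b k₁ k₂ k₃ k₄ (u 1) (y 1) :=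
    weighted_norm_sq_add_pos (by positivity) (by positivity)
      (h.endpoint_ne_zero hk₁.ne' hk₃.ne')
  exact re_lt_zero_of_real_quadratic (h.totalInertia_pos hb hk₁ hk₃) hdamping
    (mul_nonneg (by positivity) (timoshenkoEnergy_nonneg hb.le zero_le_one w v))
    (h.eigenvalue_ne_zero hk₁.ne' hk₃.ne') h.eigenvalue_quadratic

theorem neg_max_le_eigenvalue_re (h : IsTimoshenkoMode b k₁ k₂ k₃ k₄ lam u y w v) (hb : 0 < b)
    (hk₁ : 0 < k₁) (hk₃ : 0 < k₃) (hmax : 0 ≤ max k₂ k₄) : -max k₂ k₄ ≤ lam.re :=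
  neg_le_re_of_real_quadratic (h.totalInertia_pos hb hk₁ hk₃)
    (boundaryDamping_le_max_mul_totalInertia hb.le hk₁.le hk₃.le hmax u y)
    (mul_nonneg (by positivity) (timoshenkoEnergy_nonneg hb.le zero_le_one w v))
    hmax h.eigenvalue_quadratic

end IsTimoshenkoMode

/-- Every eigenvalue of the dissipative Timoshenko boundary-feedback problem lies
in the strip `-(k₂ + k₄) ≤ Re λ < 0`. -/
theorem eigenvalue_strip
    (b k₁ k₂ k₃ k₄ : ℝ) (hb : 0 < b) (hk₁ : 0 < k₁) (hk₂ : 0 < k₂)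
    (hk₃ : 0 < k₃) (hk₄ : 0 < k₄) (lam : ℂ)
    (hlam : IsDissipativeEigenvalue b k₁ k₂ k₃ k₄ lam) :
    -(k₂ + k₄) ≤ lam.re ∧ lam.re < 0 := by
  obtain ⟨u, y, w, v, hmode⟩ := hlam.exists_mode
  have hmax_le : max k₂ k₄ ≤ k₂ + k₄ := max_le_add_of_nonneg hk₂.le hk₄.le
  have hmax : 0 ≤ max k₂ k₄ := le_max_of_le_left hk₂.le
  exact ⟨(neg_le_neg hmax_le).trans (hmode.neg_max_le_eigenvalue_re hb hk₁ hk₃ hmax),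
    hmode.eigenvalue_re_lt_zero hb hk₁ hk₂ hk₃ hk₄⟩
end

section
/- Let a, b > 0 be real constants and λ ∈ ℝ. Suppose u, y : [0,1] → ℂ are twice continuously differentiable and satisfy on [0,1]: u''(x) + y'(x) + λ²u(x) = 0 and a·y''(x) − b·u'(x) − b·y(x) + λ²y(x) = 0, together with the boundary conditions u(0) = y(0) = 0, u(1) = y(1) = 0, u'(1) = y'(1) = 0. Then u and y vanish identically on [0,1]. -/
/-!
The conditions at `x = 1` are full Cauchy data for the pair `w = (u, y)`. As `a ≠ 0`, the equations
can be solved for the highest derivatives, so that `w'' = A w' + B w` with bounded operators `A` and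
`B`; in the phase variable `(w, w')` this is a linear first-order equation, whose only solution with
zero data at one time is zero, by Grönwall's inequality.
-/

open Set

section Uniqueness

open ContinuousLinearMap

variable {E : Type*} [NormedAddCommGroup E] [NormedSpace ℝ E] {c d t₀ : ℝ}

theorem ode_eqOn_Icc_of_lipschitzOnWith {v : ℝ → E → E} {s : ℝ → Set E} {K : NNReal} {f g : ℝ → E}
    (hv : ∀ t ∈ Icc c d, LipschitzOnWith K (v t) (s t))
    (hf : ∀ t ∈ Icc c d, HasDerivWithinAt f (v t (f t)) (Icc c d) t)
    (hfs : ∀ t ∈ Icc c d, f t ∈ s t)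
    (hg : ∀ t ∈ Icc c d, HasDerivWithinAt g (v t (g t)) (Icc c d) t)
    (hgs : ∀ t ∈ Icc c d, g t ∈ s t)
    (ht₀ : t₀ ∈ Icc c d) (hfg : f t₀ = g t₀) :
    EqOn f g (Icc c d) := by
  have hf_cont : ContinuousOn f (Icc c d) := HasDerivWithinAt.continuousOn hf
  have hg_cont : ContinuousOn g (Icc c d) := HasDerivWithinAt.continuousOn hg
  have left_subset : Icc c t₀ ⊆ Icc c d := Icc_subset_Icc_right ht₀.2
  have right_subset : Icc t₀ d ⊆ Icc c d := Icc_subset_Icc_left ht₀.1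
  have mem_left {t : ℝ} (ht : t ∈ Ioc c t₀) : t ∈ Icc c d :=
    left_subset (Ioc_subset_Icc_self ht)
  have mem_right {t : ℝ} (ht : t ∈ Ico t₀ d) : t ∈ Icc c d :=
    right_subset (Ico_subset_Icc_self ht)
  have nhds_left {t : ℝ} (ht : t ∈ Ioc c t₀) : Icc c d ∈ nhdsWithin t (Iic t) :=
    Icc_mem_nhdsLE_of_mem ⟨ht.1, ht.2.trans ht₀.2⟩
  have nhds_right {t : ℝ} (ht : t ∈ Ico t₀ d) : Icc c d ∈ nhdsWithin t (Ici t) :=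
    Icc_mem_nhdsGE_of_mem ⟨ht₀.1.trans ht.1, ht.2⟩
  rw [← Icc_union_Icc_eq_Icc ht₀.1 ht₀.2]
  refine EqOn.union ?_ ?_
  · exact ODE_solution_unique_of_mem_Icc_left (fun t ht ↦ hv t (mem_left ht))
      (hf_cont.mono left_subset)
      (fun t ht ↦ (hf t (mem_left ht)).mono_of_mem_nhdsWithin (nhds_left ht))
      (fun t ht ↦ hfs t (mem_left ht))
      (hg_cont.mono left_subset)
      (fun t ht ↦ (hg t (mem_left ht)).mono_of_mem_nhdsWithin (nhds_left ht))
      (fun t ht ↦ hgs t (mem_left ht)) hfg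
  · exact ODE_solution_unique_of_mem_Icc_right (fun t ht ↦ hv t (mem_right ht))
      (hf_cont.mono right_subset)
      (fun t ht ↦ (hf t (mem_right ht)).mono_of_mem_nhdsWithin (nhds_right ht))
      (fun t ht ↦ hfs t (mem_right ht))
      (hg_cont.mono right_subset)
      (fun t ht ↦ (hg t (mem_right ht)).mono_of_mem_nhdsWithin (nhds_right ht))
      (fun t ht ↦ hgs t (mem_right ht)) hfg

variable {𝕜 : Type*} [NontriviallyNormedField 𝕜] [NormedSpace 𝕜 E]

theorem linear_ode_eqOn_zero_Icc {L : ℝ → E →L[𝕜] E} {f : ℝ → E}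
    (hL : ContinuousOn L (Icc c d))
    (hf : ∀ t ∈ Icc c d, HasDerivWithinAt f (L t (f t)) (Icc c d) t)
    (ht₀ : t₀ ∈ Icc c d) (hf₀ : f t₀ = 0) :
    EqOn f 0 (Icc c d) := by
  obtain ⟨K, hK⟩ := isCompact_Icc.exists_bound_of_continuousOn hL
  have lipschitz (t : ℝ) (ht : t ∈ Icc c d) : LipschitzOnWith K.toNNReal (L t) univ :=
    ((L t).lipschitz.weaken (NNReal.le_toNNReal_of_coe_le (hK t ht))).lipschitzOnWith
  have zero_solves (t : ℝ) : HasDerivWithinAt (0 : ℝ → E) (L t 0) (Icc c d) t := by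
    simpa only [map_zero] using hasDerivWithinAt_zero t (Icc c d)
  exact ode_eqOn_Icc_of_lipschitzOnWith lipschitz hf (fun _ _ ↦ mem_univ _)
    (fun t _ ↦ zero_solves t) (fun _ _ ↦ mem_univ _) ht₀ hf₀

theorem linear_ode_second_order_eqOn_zero_Icc {A B : ℝ → E →L[𝕜] E} {w w' : ℝ → E}
    (hA : ContinuousOn A (Icc c d)) (hB : ContinuousOn B (Icc c d))
    (hw : ∀ t ∈ Icc c d, HasDerivWithinAt w (w' t) (Icc c d) t)
    (hw' : ∀ t ∈ Icc c d, HasDerivWithinAt w' (A t (w' t) + B t (w t)) (Icc c d) t)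
    (ht₀ : t₀ ∈ Icc c d) (hw₀ : w t₀ = 0) (hw'₀ : w' t₀ = 0) :
    EqOn w 0 (Icc c d) := by
  let L (t : ℝ) : E × E →L[𝕜] E × E :=
    (snd 𝕜 E E).prod (A t ∘L snd 𝕜 E E + B t ∘L fst 𝕜 E E)
  have hL : ContinuousOn L (Icc c d) :=
    (prodₗᵢ 𝕜 (E := E × E)).continuous.comp_continuousOn <| continuousOn_const.prodMk <|
      (hA.clm_comp continuousOn_const).add (hB.clm_comp continuousOn_const)
  have phase_eq_zero : EqOn (fun t ↦ (w t, w' t)) 0 (Icc c d) :=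
    linear_ode_eqOn_zero_Icc hL (fun t ht ↦ (hw t ht).prodMk (hw' t ht)) ht₀
      (Prod.mk_eq_zero.2 ⟨hw₀, hw'₀⟩)
  exact fun t ht ↦ congrArg Prod.fst (phase_eq_zero ht)

end Uniqueness

section Timoshenko

open ContinuousLinearMap

theorem overdetermined_bvp_trivial_general {𝕜 : Type*} [RCLike 𝕜] {a b lam : 𝕜} (ha : a ≠ 0)
    {u y : ℝ → 𝕜} (hu : ContDiff ℝ 2 u) (hy : ContDiff ℝ 2 y) {c d x₀ : ℝ}
    (hequ : ∀ x ∈ Icc c d, deriv (deriv u) x + deriv y x + lam ^ 2 * u x = 0)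
    (heqy : ∀ x ∈ Icc c d,
      a * deriv (deriv y) x - b * deriv u x - b * y x + lam ^ 2 * y x = 0)
    (hx₀ : x₀ ∈ Icc c d) (hu₀ : u x₀ = 0) (hy₀ : y x₀ = 0)
    (hu'₀ : deriv u x₀ = 0) (hy'₀ : deriv y x₀ = 0) :
    ∀ x ∈ Icc c d, u x = 0 ∧ y x = 0 := by
  let A : 𝕜 × 𝕜 →L[𝕜] 𝕜 × 𝕜 := (-snd 𝕜 𝕜 𝕜).prod ((b / a) • fst 𝕜 𝕜 𝕜)
  let B : 𝕜 × 𝕜 →L[𝕜] 𝕜 × 𝕜 :=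
    (-lam ^ 2 • fst 𝕜 𝕜 𝕜).prod (((b - lam ^ 2) / a) • snd 𝕜 𝕜 𝕜)
  have second_deriv_eq (x : ℝ) (hx : x ∈ Icc c d) :
      (deriv (deriv u) x, deriv (deriv y) x) = A (deriv u x, deriv y x) + B (u x, y x) := by
    refine Prod.ext ?_ ?_
    · change deriv (deriv u) x = -deriv y x + -lam ^ 2 * u x
      linear_combination hequ x hx
    · change deriv (deriv y) x = b / a * deriv u x + (b - lam ^ 2) / a * y x
      field_simp
      linear_combination heqy x hx
  have hasDerivAt_pair {f g : ℝ → 𝕜} (hf : Differentiable ℝ f) (hg : Differentiable ℝ g) (x : ℝ) :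
      HasDerivAt (fun t ↦ (f t, g t)) (deriv f x, deriv g x) x :=
    (hf x).hasDerivAt.prodMk (hg x).hasDerivAt
  have pair_eq_zero : EqOn (fun x ↦ (u x, y x)) 0 (Icc c d) :=
    linear_ode_second_order_eqOn_zero_Icc (A := fun _ ↦ A) (B := fun _ ↦ B)
      continuousOn_const continuousOn_const
      (fun x _ ↦ (hasDerivAt_pair (hu.differentiable two_ne_zero)
        (hy.differentiable two_ne_zero) x).hasDerivWithinAt)
      (fun x hx ↦ second_deriv_eq x hx ▸ (hasDerivAt_pair hu.differentiable_deriv_two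
        hy.differentiable_deriv_two x).hasDerivWithinAt)
      hx₀ (Prod.mk_eq_zero.2 ⟨hu₀, hy₀⟩) (Prod.mk_eq_zero.2 ⟨hu'₀, hy'₀⟩)
  exact fun x hx ↦ Prod.mk_eq_zero.1 (pair_eq_zero hx)

end Timoshenko

/-- No purely imaginary eigenvalues: the overdetermined boundary value problem
obtained from the Timoshenko system with spectral parameter `iλ`, `λ ∈ ℝ`,
has only the trivial solution. -/
theorem overdetermined_bvp_trivial
    (a b : ℝ) (ha : 0 < a) (hb : 0 < b) (lam : ℝ)
    (u y : ℝ → ℂ) (hu : ContDiff ℝ 2 u) (hy : ContDiff ℝ 2 y)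
    (hequ : ∀ x ∈ Icc (0:ℝ) 1,
      deriv (deriv u) x + deriv y x + (lam : ℂ) ^ 2 * u x = 0)
    (heqy : ∀ x ∈ Icc (0:ℝ) 1,
      (a : ℂ) * deriv (deriv y) x - (b : ℂ) * deriv u x - (b : ℂ) * y x
        + (lam : ℂ) ^ 2 * y x = 0)
    (hu0 : u 0 = 0) (hy0 : y 0 = 0)
    (hu1 : u 1 = 0) (hy1 : y 1 = 0)
    (hu'1 : deriv u 1 = 0) (hy'1 : deriv y 1 = 0) :
    ∀ x ∈ Icc (0:ℝ) 1, u x = 0 ∧ y x = 0 :=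
  overdetermined_bvp_trivial_general (Complex.ofReal_ne_zero.2 ha.ne') hu hy hequ heqy
    (right_mem_Icc.2 zero_le_one) hu1 hy1 hu'1 hy'1
end

section
/- Let b > 0 and k₁, k₃ ∈ ℝ. Define γ₁ := (b + 4(k₁+k₃))/(4π) and γ₂ := (−8b + b² + 8b·k₁ + 8b·k₃ + 64k₁k₃ + 8b·cos(√b) + 16√b·(k₁−k₃)·sin(√b))/(64π²). Then 2π²·(γ₁² − 4γ₂) = b + 2(k₁−k₃)² − b·cos(√b) − 2√b·(k₁−k₃)·sin(√b), this quantity is nonnegative, and γ₁² − 4γ₂ = 0 if and only if k₁ = k₃ and √b = 2pπ for some positive integer p. -/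
open Real

/-!
Put `r = √b`, `d = k₁ - k₃`, `c = cos √b` and `s = sin √b`. Twice the quantity `2π²(γ₁² - 4γ₂)` is
the sum of squares `(2d - r s)² + (r (1 - c))²`, by `c² + s² = 1`. As `r ≠ 0`, it vanishes only if
`c = 1`, which forces `s = 0` and then `d = 0`.
-/

section NormalizedDiscr

variable {R : Type*} [CommRing R]

/-- The quantity `2π²(γ₁² - 4γ₂)` as a polynomial in `r = √b`, the difference `d = k₁ - k₃` and the
coordinates of the point `(c, s) = (cos √b, sin √b)`. Keeping `c` and `s` as free variables makes
the relation `c² + s² = 1` the only trigonometry in its sign analysis. -/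
def normalizedDiscr (r d c s : R) : R :=
  r ^ 2 + 2 * d ^ 2 - r ^ 2 * c - 2 * r * d * s

theorem two_mul_normalizedDiscr {c s : R} (h : c ^ 2 + s ^ 2 = 1) (r d : R) :
    2 * normalizedDiscr r d c s = (2 * d - r * s) ^ 2 + (r * (1 - c)) ^ 2 := by
  rw [normalizedDiscr]
  linear_combination -r ^ 2 * h

variable [LinearOrder R] [IsStrictOrderedRing R]

theorem normalizedDiscr_nonneg {c s : R} (h : c ^ 2 + s ^ 2 = 1) (r d : R) :
    0 ≤ normalizedDiscr r d c s := by
  refine nonneg_of_mul_nonneg_right ?_ (two_pos (α := R))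
  rw [two_mul_normalizedDiscr h]
  positivity

theorem normalizedDiscr_eq_zero_iff {r c s : R} (h : c ^ 2 + s ^ 2 = 1) (hr : r ≠ 0) (d : R) :
    normalizedDiscr r d c s = 0 ↔ d = 0 ∧ c = 1 := by
  constructor
  · intro h_zero
    have sum_sq : (2 * d - r * s) ^ 2 + (r * (1 - c)) ^ 2 = 0 := by
      rw [← two_mul_normalizedDiscr h, h_zero, mul_zero]
    obtain ⟨h_left, h_right⟩ :=
      (add_eq_zero_iff_of_nonneg (sq_nonneg _) (sq_nonneg _)).mp sum_sq
    have hc : c = 1 :=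
      (sub_eq_zero.mp ((mul_eq_zero.mp (sq_eq_zero_iff.mp h_right)).resolve_left hr)).symm
    have hs : s = 0 := by simpa [hc] using h
    have hd : d = 0 := by simpa [hs] using h_left
    exact ⟨hd, hc⟩
  · rintro ⟨rfl, rfl⟩
    rw [normalizedDiscr]
    ring

end NormalizedDiscr

theorem cos_eq_one_iff_exists_nat_of_pos {x : ℝ} (hx : 0 < x) :
    cos x = 1 ↔ ∃ p : ℕ, 0 < p ∧ x = 2 * p * π := by
  rw [cos_eq_one_iff]
  constructor
  · rintro ⟨n, rfl⟩
    have hn : 0 < n := by exact_mod_cast pos_of_mul_pos_left hx two_pi_pos.le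
    lift n to ℕ using hn.le
    refine ⟨n, by exact_mod_cast hn, ?_⟩
    push_cast
    ring
  · rintro ⟨p, -, rfl⟩
    refine ⟨p, ?_⟩
    push_cast
    ring

/-- Discriminant identity for the constants `γ₁, γ₂` governing the first-order
correction of the large eigenvalues: an explicit formula for `2π²(γ₁² − 4γ₂)`,
its nonnegativity, and the characterization of its vanishing
(`k₁ = k₃` and `√b = 2pπ`, which is the negation of Condition (C₁)). -/
theorem gamma_discriminant
    (b : ℝ) (hb : 0 < b) (k₁ k₃ : ℝ) :
    let γ₁ := (b + 4 * (k₁ + k₃)) / (4 * π)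
    let γ₂ := (-8 * b + b ^ 2 + 8 * b * k₁ + 8 * b * k₃ + 64 * k₁ * k₃
        + 8 * b * Real.cos (Real.sqrt b)
        + 16 * Real.sqrt b * (k₁ - k₃) * Real.sin (Real.sqrt b)) / (64 * π ^ 2)
    2 * π ^ 2 * (γ₁ ^ 2 - 4 * γ₂)
        = b + 2 * (k₁ - k₃) ^ 2 - b * Real.cos (Real.sqrt b)
          - 2 * Real.sqrt b * (k₁ - k₃) * Real.sin (Real.sqrt b)
      ∧ 0 ≤ γ₁ ^ 2 - 4 * γ₂
      ∧ (γ₁ ^ 2 - 4 * γ₂ = 0 ↔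
          (k₁ = k₃ ∧ ∃ p : ℕ, 0 < p ∧ Real.sqrt b = 2 * p * π)) := by
  intro γ₁ γ₂
  have discr_eq : 2 * π ^ 2 * (γ₁ ^ 2 - 4 * γ₂)
      = normalizedDiscr (√b) (k₁ - k₃) (cos √b) (sin √b) := by
    simp only [γ₁, γ₂, normalizedDiscr, sq_sqrt hb.le]
    field_simp
    ring
  have circle : cos √b ^ 2 + sin √b ^ 2 = 1 := cos_sq_add_sin_sq _
  have scale_pos : 0 < 2 * π ^ 2 := by positivity
  refine ⟨?_, ?_, ?_⟩
  · rw [discr_eq, normalizedDiscr, sq_sqrt hb.le]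
  · refine nonneg_of_mul_nonneg_right ?_ scale_pos
    rw [discr_eq]
    exact normalizedDiscr_nonneg circle _ _
  · rw [← mul_eq_zero_iff_left scale_pos.ne', discr_eq,
      normalizedDiscr_eq_zero_iff circle (sqrt_ne_zero'.mpr hb), sub_eq_zero,
      cos_eq_one_iff_exists_nat_of_pos (sqrt_pos.mpr hb)]
end

section
/- Let b, k₁, k₂, k₃, k₄ > 0 be real constants and assume that k₁ ≠ k₃ or cos(√b) ≠ 1. Define γ₄ := −2b(k₁k₂ + k₃k₄)² − 16k₁k₂k₃k₄(k₁ − k₃)², γ₅ := 2(k₁k₂ + k₃k₄)², γ₆ := (k₁k₂ − k₃k₄)², and γ₇ := 16k₁k₂(k₁ − k₃)k₃k₄. Then γ₄ + γ₅·b·cos(√b) + γ₆·b·sin²(√b) + γ₇·√b·sin(√b) < 0. -/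
open Real

/-!
Write `x = √b`, `p = k₁k₂`, `q = k₃k₄` and `d = k₁ - k₃`. Completing the square in `d`, and then
replacing `sin² x` by `1 - cos² x`, turns the combination into
`-(4pq (2d - x sin x)² + (p + q)² x² (1 - cos x)²)`. The two squares vanish together only if
`x (1 - cos x) = 0`, in which case `x sin x = 0` and so `d = 0`.
-/

theorem gamma_combination_eq_neg_add_sq {R : Type*} [CommRing R] (p q d x : R) {s c : R}
    (hsc : s ^ 2 + c ^ 2 = 1) :
    -2 * x ^ 2 * (p + q) ^ 2 - 16 * p * q * d ^ 2 + 2 * (p + q) ^ 2 * x ^ 2 * c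
        + (p - q) ^ 2 * x ^ 2 * s ^ 2 + 16 * p * q * d * x * s
      = -(4 * p * q * (2 * d - x * s) ^ 2 + (p + q) ^ 2 * (x * (1 - c)) ^ 2) := by
  linear_combination (p + q) ^ 2 * x ^ 2 * hsc

theorem mul_sin_eq_zero_of_mul_one_sub_cos_eq_zero {x : ℝ} (h : x * (1 - cos x) = 0) :
    x * sin x = 0 := by
  rcases mul_eq_zero.mp h with hx | hcos
  · rw [hx, zero_mul]
  · rw [sin_eq_zero_iff_cos_eq.mpr (.inl (sub_eq_zero.mp hcos).symm), mul_zero]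

theorem two_mul_sub_mul_sin_ne_zero_or_mul_one_sub_cos_ne_zero {d x : ℝ}
    (h : d ≠ 0 ∨ cos x ≠ 1) : 2 * d - x * sin x ≠ 0 ∨ x * (1 - cos x) ≠ 0 := by
  by_contra! ⟨hsin, hcos⟩
  have hd : d = 0 := by linarith [mul_sin_eq_zero_of_mul_one_sub_cos_eq_zero hcos]
  have hcos_ne : cos x ≠ 1 := h.resolve_left (not_not.mpr hd)
  have hx : x ≠ 0 := fun hx ↦ hcos_ne (hx ▸ cos_zero)
  exact mul_ne_zero hx (sub_ne_zero.mpr hcos_ne.symm) hcos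

theorem four_mul_mul_sq_add_sq_mul_sq_pos {R : Type*} [CommRing R] [LinearOrder R]
    [IsStrictOrderedRing R] {p q u v : R} (hpq : 0 < p * q) (huv : u ≠ 0 ∨ v ≠ 0) :
    0 < 4 * p * q * u ^ 2 + (p + q) ^ 2 * v ^ 2 := by
  have hpq4 : 0 < 4 * p * q := by linarith
  have hsum : 0 < (p + q) ^ 2 := hpq4.trans_le (four_mul_le_sq_add p q)
  rcases huv with hu | hv <;> positivity

theorem gamma_combination_neg_general {p q d x : ℝ} (hpq : 0 < p * q)
    (h : d ≠ 0 ∨ cos x ≠ 1) :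
    -2 * x ^ 2 * (p + q) ^ 2 - 16 * p * q * d ^ 2 + 2 * (p + q) ^ 2 * x ^ 2 * cos x
      + (p - q) ^ 2 * x ^ 2 * sin x ^ 2 + 16 * p * q * d * x * sin x < 0 := by
  rw [gamma_combination_eq_neg_add_sq p q d x (sin_sq_add_cos_sq x), neg_lt_zero]
  exact four_mul_mul_sq_add_sq_mul_sq_pos hpq
    (two_mul_sub_mul_sin_ne_zero_or_mul_one_sub_cos_ne_zero h)

/-- Under Condition (C₁) (`k₁ ≠ k₃` or `cos √b ≠ 1`), the combination
`γ₄ + γ₅ b cos √b + γ₆ b sin²√b + γ₇ √b sin √b` is strictly negative; this is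
the key step showing that the coefficients `β₁, β₂` in the eigenvalue
expansions of the dissipative Timoshenko operator are nonzero. -/
theorem gamma_combination_neg
    (b k₁ k₂ k₃ k₄ : ℝ) (hb : 0 < b) (hk₁ : 0 < k₁) (hk₂ : 0 < k₂)
    (hk₃ : 0 < k₃) (hk₄ : 0 < k₄)
    (hC₁ : k₁ ≠ k₃ ∨ Real.cos (Real.sqrt b) ≠ 1) :
    let γ₄ := -2 * b * (k₁ * k₂ + k₃ * k₄) ^ 2
        - 16 * k₁ * k₂ * k₃ * k₄ * (k₁ - k₃) ^ 2
    let γ₅ := 2 * (k₁ * k₂ + k₃ * k₄) ^ 2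
    let γ₆ := (k₁ * k₂ - k₃ * k₄) ^ 2
    let γ₇ := 16 * k₁ * k₂ * (k₁ - k₃) * k₃ * k₄
    γ₄ + γ₅ * b * Real.cos (Real.sqrt b) + γ₆ * b * Real.sin (Real.sqrt b) ^ 2
      + γ₇ * Real.sqrt b * Real.sin (Real.sqrt b) < 0 := by
  have h := gamma_combination_neg_general (x := √b)
    (mul_pos (mul_pos hk₁ hk₂) (mul_pos hk₃ hk₄)) (hC₁.imp_left sub_ne_zero.mpr)
  rw [sq_sqrt hb.le] at h
  linarith only [h]
end

section
/- Let p be a positive integer and let k₁, k₂, k₄ > 0 with k₂ ≠ k₄; set k₃ := k₁ and b := 4p²π². Then there exist an integer k₀ ≥ 1 and functions λ¹, λ² : ℤ → ℂ such that for every integer k with |k| ≥ k₀, λ¹(k) and λ²(k) are eigenvalues of the dissipative Timoshenko boundary-feedback problem, and as |k| → ∞: k²·(λ¹(k) − i·k·π − i·(2k₁ + p²π²)/(2kπ)) → −k₁k₂/π² and k²·(λ²(k) − i·k·π − i·(2k₁ + p²π²)/(2kπ)) → −k₁k₄/π². -/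
open Set Real Filter

/-!
The characteristic roots of the system are `±(m + δ)` and `±(m - δ)`, where `m² + δ² = λ²` and
`2mδ = i√b λ`. The solutions vanishing at `0` form a plane, and `λ` is an eigenvalue as soon as the
`2 × 2` matrix of the two boundary conditions at `1` on that plane is singular. Its entries are
bilinear in `(cosh m, sinh m)` and `(cosh δ, sinh δ)`.

Put `ε = 1/k` and look for `m = ikπ + ε(ik₁/π + εω)` with a new unknown `ω`. Because `√b = 2pπ`, `δ`
is `O(ε²)`-close to `ipπ`, so antiperiodicity replaces `m`, `δ` in the hyperbolic functions by their
small offsets. As `k₁ = k₃`, the single value `ik₁/π` cancels the leading order of both entries on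
the diagonal, and a suitable multiple of the determinant extends analytically across `ε = 0`, with
value `iπ(π²ω + k₁k₂)(π²ω + k₁k₄)` there. Its two roots `ω` are simple as `k₂ ≠ k₄`, and the
implicit function theorem continues each of them to a branch `ω(ε)` of solutions, whose limit is the
coefficient of `1/k²` in the expansion of `λ`.
-/

namespace Timoshenko

noncomputable section

section General

lemma eq_zero_of_hasDerivAt_of_forall_mem {𝕜 E : Type*} [NontriviallyNormedField 𝕜]
    [NormedAddCommGroup E] [NormedSpace 𝕜 E] {f : 𝕜 → E} {f' : E} {s : Set 𝕜} {x : 𝕜}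
    (hs : UniqueDiffWithinAt 𝕜 s x) (hf : HasDerivAt f f' x) (hx : x ∈ s)
    (hzero : ∀ t ∈ s, f t = 0) : f' = 0 :=
  hs.eq_deriv s hf.hasDerivWithinAt
    ((hasDerivWithinAt_const x s (0 : E)).congr hzero (hzero x hx))

lemma exists_tendsto_eventually_eq_zero {𝕜 E : Type*} [NontriviallyNormedField 𝕜]
    [CompleteSpace 𝕜] [NormedAddCommGroup E] [NormedSpace 𝕜 E] [CompleteSpace E] {F : E × 𝕜 → 𝕜}
    {F' : E × 𝕜 →L[𝕜] 𝕜} {x₀ : E} {w₀ w' : 𝕜} (hF : HasStrictFDerivAt F F' (x₀, w₀))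
    (hzero : F (x₀, w₀) = 0) (hpartial : HasDerivAt (fun w => F (x₀, w)) w' w₀) (hw' : w' ≠ 0) :
    ∃ φ : E → 𝕜, Tendsto φ (nhds x₀) (nhds w₀) ∧ ∀ᶠ x in nhds x₀, F (x, φ x) = 0 := by
  have hslice : HasDerivAt (fun w => F (x₀, w)) (F' (0, 1)) w₀ :=
    hF.hasFDerivAt.comp_hasDerivAt w₀ ((hasDerivAt_const w₀ x₀).prodMk (hasDerivAt_id w₀))
  have hinv : (F' ∘L .inr 𝕜 E 𝕜).IsInvertible := by
    refine ⟨.unitsEquivAut 𝕜 (.mk0 w' hw'), ?_⟩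
    ext
    simp [← hslice.unique hpartial]
  refine ⟨hF.implicitFunctionOfProdDomain hinv, hF.tendsto_implicitFunctionOfProdDomain hinv, ?_⟩
  simpa only [hzero] using hF.eventually_apply_implicitFunctionOfProdDomain hinv

lemma tendsto_inv_intCast_cocompact :
    Tendsto (fun k : ℤ => (k : ℂ)⁻¹) (cocompact ℤ) (nhds 0) := by
  refine tendsto_inv₀_cobounded.comp (tendsto_norm_atTop_iff_cobounded.1 ?_)
  refine tendsto_norm_cocompact_atTop.congr fun k => ?_
  rw [Complex.norm_intCast, Int.norm_eq_abs]

lemma exists_forall_le_abs_of_eventually_cocompact {P : ℤ → Prop}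
    (h : ∀ᶠ k in cocompact ℤ, P k) : ∃ k₀ : ℤ, 1 ≤ k₀ ∧ ∀ k : ℤ, k₀ ≤ |k| → P k := by
  rw [← Metric.cobounded_eq_cocompact] at h
  obtain ⟨r, -, hr⟩ := (hasBasis_cobounded_norm (E := ℤ)).eventually_iff.1 h
  refine ⟨max 1 ⌈r⌉, le_max_left _ _, fun k hk => hr ?_⟩
  rw [mem_ofPred_eq, Int.norm_eq_abs, ← Int.cast_abs]
  exact Int.ceil_le.1 ((le_max_right _ _).trans hk)

end General

section HyperbolicFunctions

lemma exp_add_eq_cosh_sinh (x y : ℂ) :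
    Complex.exp (x + y) =
      (Complex.cosh x + Complex.sinh x) * (Complex.cosh y + Complex.sinh y) := by
  rw [Complex.exp_add, Complex.cosh_add_sinh, Complex.cosh_add_sinh]

lemma cosh_int_mul_pi_mul_I_add (n : ℤ) (z : ℂ) :
    Complex.cosh (n * (π * Complex.I) + z) = n.negOnePow * Complex.cosh z := by
  rw [add_comm]
  exact Complex.cosh_antiperiodic.add_int_mul_eq n

lemma sinh_int_mul_pi_mul_I_add (n : ℤ) (z : ℂ) :
    Complex.sinh (n * (π * Complex.I) + z) = n.negOnePow * Complex.sinh z := by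
  rw [add_comm]
  exact Complex.sinh_antiperiodic.add_int_mul_eq n

/-- The entire function `z ↦ sinh z / z`, with value `1` at `0`; it makes the divisions by `ε` in
`scaledBoundaryMatrix` explicit. -/
def sinhc : ℂ → ℂ :=
  dslope Complex.sinh 0

lemma mul_sinhc (z : ℂ) : z * sinhc z = Complex.sinh z := by
  simpa [sinhc] using sub_smul_dslope Complex.sinh 0 z

lemma sinhc_zero : sinhc 0 = 1 := by
  simp [sinhc]

lemma differentiable_sinhc : Differentiable ℂ sinhc := by
  rw [← differentiableOn_univ]
  exact (Complex.differentiableOn_dslope univ_mem).2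
    Complex.differentiable_sinh.differentiableOn

@[fun_prop]
lemma analyticAt_sinhc (z : ℂ) : AnalyticAt ℂ sinhc z :=
  differentiable_sinhc.analyticAt z

@[fun_prop]
lemma analyticAt_deriv_sinhc (z : ℂ) : AnalyticAt ℂ (deriv sinhc) z :=
  (analyticAt_sinhc z).deriv

lemma sinhc_add_mul_deriv_sinhc (z : ℂ) :
    sinhc z + z * deriv sinhc z = Complex.cosh z := by
  have hprod := (hasDerivAt_id z).mul (differentiable_sinhc z).hasDerivAt
  simp only [id_eq, one_mul] at hprod
  exact hprod.unique
    ((Complex.hasDerivAt_sinh z).congr_of_eventuallyEq (.of_forall mul_sinhc))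

lemma even_sinhc : Function.Even sinhc := fun z => by
  rcases eq_or_ne z 0 with rfl | hz
  · rw [neg_zero]
  · refine mul_left_cancel₀ (neg_ne_zero.2 hz) ?_
    rw [mul_sinhc, Complex.sinh_neg, neg_mul, mul_sinhc]

lemma deriv_sinhc_zero : deriv sinhc 0 = 0 := by
  have hneg := deriv_comp_neg sinhc 0
  rw [neg_zero, (funext even_sinhc : (fun z => sinhc (-z)) = sinhc)] at hneg
  exact self_eq_neg.1 hneg

end HyperbolicFunctions

section Modes

variable {ι : Type*} [Fintype ι]

/-- The exponential polynomial `x ↦ ∑ j, c j * exp (r j * x)`, the shape of the solutions of a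
linear ordinary differential system with constant coefficients and simple characteristic roots
`r j`. -/
def expSum (c r : ι → ℂ) (x : ℝ) : ℂ :=
  ∑ j, c j * Complex.exp (r j * x)

lemma hasDerivAt_expSum (c r : ι → ℂ) (x : ℝ) :
    HasDerivAt (expSum c r) (expSum (c * r) r x) x := by
  refine HasDerivAt.fun_sum fun j _ => ?_
  have hlin : HasDerivAt (fun t : ℝ => r j * (t : ℂ)) (r j) x := by
    simpa using (Complex.ofRealCLM.hasDerivAt (x := x)).const_mul (r j)
  exact (hlin.cexp.const_mul (c j)).congr_deriv (by rw [Pi.mul_apply]; ring)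

lemma deriv_expSum (c r : ι → ℂ) : deriv (expSum c r) = expSum (c * r) r :=
  funext fun x => (hasDerivAt_expSum c r x).deriv

lemma contDiff_expSum (c r : ι → ℂ) {n : WithTop ℕ∞} : ContDiff ℝ n (expSum c r) := by
  have hcast : ContDiff ℝ n (fun x : ℝ => (x : ℂ)) := Complex.ofRealCLM.contDiff
  exact ContDiff.sum fun j _ => contDiff_const.mul (contDiff_const.mul hcast).cexp

lemma expSum_apply_zero (c r : ι → ℂ) : expSum c r 0 = ∑ j, c j := by
  simp [expSum]

lemma expSum_apply_one (c r : ι → ℂ) : expSum c r 1 = ∑ j, c j * Complex.exp (r j) := by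
  simp [expSum]

-- The eigenfunctions are `u = ∑ a r exp (r x)` and `y = ∑ a κ exp (r x)`, for which
-- `u' + y = lam² ∑ a exp (r x)`: this is why `hu₁` is the boundary condition divided by `lam`.
theorem isDissipativeEigenvalue_of_modes {b k₁ k₂ k₃ k₄ : ℝ} {lam : ℂ} {a r κ : ι → ℂ}
    (hκ : ∀ j, r j ^ 2 + κ j = lam ^ 2) (hroot : ∀ j, κ j ^ 2 + b * lam ^ 2 = 0)
    (hu₀ : ∑ j, a j * r j = 0) (hy₀ : ∑ j, a j * κ j = 0)
    (hne : ∑ j, a j * r j * r j ≠ 0 ∨ ∑ j, a j * κ j * r j ≠ 0)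
    (hu₁ : ∑ j, a j * ((lam + k₂) * r j + k₁ * lam) * Complex.exp (r j) = 0)
    (hy₁ : ∑ j, a j * κ j * (lam ^ 2 + k₃ * r j + k₄ * lam) * Complex.exp (r j) = 0) :
    IsDissipativeEigenvalue b k₁ k₂ k₃ k₄ lam := by
  have hzero : (0 : ℝ) ∈ Icc (0 : ℝ) 1 := left_mem_Icc.2 zero_le_one
  refine ⟨expSum (a * r) r, expSum (a * κ) r, contDiff_expSum _ _, contDiff_expSum _ _,
    fun h => ?_, fun x _ => ?_, fun x _ => ?_, by rwa [expSum_apply_zero],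
    by rwa [expSum_apply_zero], ?_, ?_⟩
  · have hvanish {c : ι → ℂ} (hc : ∀ x ∈ Icc (0 : ℝ) 1, expSum c r x = 0) :
        ∑ j, c j * r j = 0 := by
      simpa only [expSum_apply_zero, Pi.mul_apply] using eq_zero_of_hasDerivAt_of_forall_mem
        (uniqueDiffOn_Icc one_pos 0 hzero) (hasDerivAt_expSum c r 0) hzero hc
    exact hne.elim (· (hvanish fun x hx => (h x hx).1)) (· (hvanish fun x hx => (h x hx).2))
  · simp only [deriv_expSum, expSum, Pi.mul_apply, Finset.mul_sum, ← Finset.sum_add_distrib,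
      ← Finset.sum_sub_distrib]
    exact Finset.sum_eq_zero fun j _ => by
      linear_combination a j * r j * Complex.exp (r j * x) * hκ j
  · simp only [deriv_expSum, expSum, Pi.mul_apply, Finset.mul_sum, ← Finset.sum_sub_distrib]
    exact Finset.sum_eq_zero fun j _ => by
      linear_combination Complex.exp (r j * x) * a j * ((κ j - b) * hκ j - hroot j)
  · simp only [deriv_expSum, expSum_apply_one, Pi.mul_apply, Finset.mul_sum,
      ← Finset.sum_add_distrib]
    rw [← mul_zero lam, ← hu₁, Finset.mul_sum]
    exact Finset.sum_congr rfl fun j _ => by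
      linear_combination k₁ * a j * Complex.exp (r j) * hκ j
  · simp only [deriv_expSum, expSum_apply_one, Pi.mul_apply, Finset.mul_sum,
      ← Finset.sum_add_distrib]
    rw [← hy₁]
    exact Finset.sum_congr rfl fun j _ => by ring

end Modes

section BoundaryMatrix

/-- The matrix of the two boundary conditions at `1`, one per row and up to nonzero factors, on the
plane of solutions vanishing at `0`. Here `±(m + δ)` and `±(m - δ)` are the characteristic roots,
and `C`, `S`, `c`, `s` stand for `cosh m`, `sinh m`, `cosh δ`, `sinh δ`; they are kept as variables
because the matrix is bilinear in `(C, S)` and `(c, s)`. -/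
def boundaryMatrix (k₁ k₂ k₃ k₄ lam m δ C S c s : ℂ) : Matrix (Fin 2) (Fin 2) ℂ :=
  !![(lam + k₂) * (m * S * c + δ * C * s) + k₁ * lam * C * c,
     (lam + k₂) * (m ^ 2 - δ ^ 2) * S * s + k₁ * lam * (m * C * s - δ * S * c);
     lam * (lam + k₄) * S * s + k₃ * (m * C * s + δ * S * c),
     lam * (lam + k₄) * (m * S * c - δ * C * s) + k₃ * (m ^ 2 - δ ^ 2) * C * c]

lemma boundaryMatrix_mul_mul (k₁ k₂ k₃ k₄ lam m δ C S c s e e' : ℂ) :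
    boundaryMatrix k₁ k₂ k₃ k₄ lam m δ (e * C) (e * S) (e' * c) (e' * s) =
      (e * e') • boundaryMatrix k₁ k₂ k₃ k₄ lam m δ C S c s := by
  simp only [← Matrix.ext_iff, Fin.forall_fin_two, boundaryMatrix, Matrix.smul_apply, smul_eq_mul,
    Matrix.of_apply, Matrix.cons_val]
  refine ⟨⟨?_, ?_⟩, ?_, ?_⟩ <;> ring

theorem isDissipativeEigenvalue_of_det_boundaryMatrix_eq_zero {b k₁ k₂ k₃ k₄ : ℝ}
    {β lam m δ : ℂ} (hb : β ^ 2 = b) (hβ : β ≠ 0) (hlam : lam ≠ 0) (hmδ : m ^ 2 - δ ^ 2 ≠ 0)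
    (hsum : m ^ 2 + δ ^ 2 = lam ^ 2) (hprod : 2 * m * δ = Complex.I * β * lam)
    (hdet : (boundaryMatrix k₁ k₂ k₃ k₄ lam m δ (Complex.cosh m) (Complex.sinh m)
      (Complex.cosh δ) (Complex.sinh δ)).det = 0) :
    IsDissipativeEigenvalue b k₁ k₂ k₃ k₄ lam := by
  obtain ⟨v, hv, hker⟩ := Matrix.exists_mulVec_eq_zero_iff.2 hdet
  have hrow (i : Fin 2) := congrFun hker i
  simp only [Fin.forall_fin_two, boundaryMatrix, Matrix.mulVec, dotProduct, Fin.sum_univ_two,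
    Matrix.of_apply, Matrix.cons_val, Pi.zero_apply] at hrow
  have hcoord : v 0 ≠ 0 ∨ v 1 ≠ 0 := by
    contrapose! hv
    exact funext (Fin.forall_fin_two.2 hv)
  have hprod₀ : 2 * m * δ ≠ 0 := by
    rw [hprod]
    exact mul_ne_zero (mul_ne_zero Complex.I_ne_zero hβ) hlam
  -- These amplitudes parametrize the modes with `u 0 = y 0 = 0`.
  refine isDissipativeEigenvalue_of_modes
    (a := ![v 0 + v 1 * (m - δ), v 0 - v 1 * (m - δ), v 0 - v 1 * (m + δ), v 0 + v 1 * (m + δ)])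
    (r := ![m + δ, -m + -δ, m + -δ, -m + δ])
    (κ := ![-(2 * m * δ), -(2 * m * δ), 2 * m * δ, 2 * m * δ]) ?_ ?_ ?_ ?_ ?_ ?_ ?_
  all_goals simp only [Fin.forall_fin_succ, IsEmpty.forall_iff, and_true, Fin.sum_univ_four,
    Matrix.cons_val, Matrix.cons_val_zero, Matrix.cons_val_succ, exp_add_eq_cosh_sinh,
    Complex.cosh_neg, Complex.sinh_neg]
  · refine ⟨?_, ?_, ?_, ?_⟩ <;> linear_combination hsum
  · simp only [hprod, neg_sq, mul_pow, hb, Complex.I_sq, and_self]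
    ring
  · ring
  · ring
  · refine hcoord.imp (fun h => ?_) (fun h => ?_)
    · refine ne_of_eq_of_ne (b := 4 * v 0 * lam ^ 2) (by rw [← hsum]; ring) ?_
      exact mul_ne_zero (mul_ne_zero (OfNat.ofNat_ne_zero 4) h) (pow_ne_zero 2 hlam)
    · refine ne_of_eq_of_ne (b := -4 * (2 * m * δ) * v 1 * (m ^ 2 - δ ^ 2)) (by ring) ?_
      exact mul_ne_zero
        (mul_ne_zero (mul_ne_zero (neg_ne_zero.2 (OfNat.ofNat_ne_zero 4)) hprod₀) h) hmδ
  · linear_combination 4 * hrow.1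
  · linear_combination -8 * m * δ * hrow.2

end BoundaryMatrix

section Scaling

variable (p k₁ k₂ k₄ : ℂ) (q : ℂ × ℂ)

/-- `(m - ikπ) / ε` in terms of the blow-up coordinates `q = (ε, ω)`, where `ε = 1/k`. -/
def meanRootOffset : ℂ :=
  Complex.I * k₁ / π + q.1 * q.2

/-- `ε * m`, where `m` is half the sum of the characteristic roots `m + δ` and `m - δ`. -/
def scaledMeanRoot : ℂ :=
  Complex.I * π + q.1 ^ 2 * meanRootOffset k₁ q

/-- The ratio `σ = lam / m`, obtained by eliminating `δ` from `m² + δ² = lam²` and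
`mδ = ipπ lam`; the branch of the square root is the one with `σ = 1` at `ε = 0`. -/
def eigenvalueRatio : ℂ :=
  ((1 + (p * π * q.1 / scaledMeanRoot k₁ q) ^ 2) ^ (2⁻¹ : ℂ))⁻¹

/-- `δ`, half the difference of the characteristic roots `m + δ` and `m - δ`. -/
def halfGap : ℂ :=
  Complex.I * p * π * eigenvalueRatio p k₁ q

/-- `ε * lam`, where `lam` is the candidate eigenvalue with coordinates `q = (ε, ω)`. -/
def scaledEigenvalue : ℂ :=
  scaledMeanRoot k₁ q * eigenvalueRatio p k₁ q

/-- `(σ - 1) / ε²`, where `σ = eigenvalueRatio p k₁ q`, written as an expression regular at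
`ε = 0`. -/
def eigenvalueRatioOffset : ℂ :=
  -(p * π / scaledMeanRoot k₁ q) ^ 2 * eigenvalueRatio p k₁ q ^ 2 /
    (eigenvalueRatio p k₁ q + 1)

/-- `(δ - ipπ) / ε²`, written as an expression regular at `ε = 0`. -/
def halfGapOffset : ℂ :=
  Complex.I * p * π * eigenvalueRatioOffset p k₁ q

/-- The remainder of the expansion of the eigenvalue, after its `1/k²` term `ω`; see
`IsRegular.scaledEigenvalue_eq`. -/
def expansionRemainder : ℂ :=
  -p ^ 2 * π * (π * eigenvalueRatioOffset p k₁ q * (2 * eigenvalueRatio p k₁ q + 1)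
    + Complex.I * meanRootOffset k₁ q * (eigenvalueRatio p k₁ q + 1))
    / (2 * scaledMeanRoot k₁ q * (eigenvalueRatio p k₁ q + 1))

/-- The boundary matrix with its second row multiplied by `ε`, with the divisions by `ε` carried
out so that it extends to `ε = 0`. The factor `G` is the extension of `(m sinh ν + k₁ cosh ν) / ε`
with `ν = m - ikπ`. -/
def scaledBoundaryMatrix : Matrix (Fin 2) (Fin 2) ℂ :=
  let ε := q.1
  let ω := q.2
  let V := meanRootOffset k₁ q
  let M := scaledMeanRoot k₁ q
  let L := scaledEigenvalue p k₁ q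
  let δ := halfGap p k₁ q
  let N := halfGapOffset p k₁ q
  let a := sinhc (ε * V)
  let b := sinhc (ε ^ 2 * N)
  let C := Complex.cosh (ε * V)
  let c := Complex.cosh (ε ^ 2 * N)
  let G := (Complex.I * π * ω + ε * V ^ 2) * a + k₁ * V * deriv sinhc (ε * V)
  !![L * c * G + k₂ * M * V * a * c + ε * (L + ε * k₂) * δ * C * N * b,
     (L + ε * k₂) * (M ^ 2 - (ε * δ) ^ 2) * V * a * N * b
      + k₁ * L * (M * C * N * b - δ * V * a * c);
     ε ^ 2 * (L * (L + ε * k₄) * V * a * N * b + k₁ * (M * C * N * b + δ * V * a * c)),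
     L * (L * c * G + k₄ * M * V * a * c - ε * (L + ε * k₄) * δ * C * N * b)
      - 2 * ε * k₁ * δ ^ 2 * C * c]

/-- Nondegeneracy of the blow-up coordinates `q`: the denominators and the square root above are
nonzero, and so is the product of the characteristic roots. -/
structure IsRegular : Prop where
  scaledMeanRoot_ne_zero : scaledMeanRoot k₁ q ≠ 0
  eigenvalueRatio_ne_zero : eigenvalueRatio p k₁ q ≠ 0
  eigenvalueRatio_add_one_ne_zero : eigenvalueRatio p k₁ q + 1 ≠ 0
  sq_sub_sq_ne_zero : scaledMeanRoot k₁ q ^ 2 - (q.1 * halfGap p k₁ q) ^ 2 ≠ 0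

variable {p k₁ k₂ k₄ q}

lemma scaledMeanRoot_mul_meanRootOffset :
    scaledMeanRoot k₁ q * meanRootOffset k₁ q =
      -k₁ + q.1 * (Complex.I * π * q.2 + q.1 * meanRootOffset k₁ q ^ 2) := by
  have hπ : (π : ℂ) ≠ 0 := Complex.ofReal_ne_zero.2 pi_ne_zero
  have hlead : Complex.I * π * meanRootOffset k₁ q = -k₁ + q.1 * (Complex.I * π * q.2) := by
    rw [meanRootOffset]
    field_simp
    linear_combination k₁ * Complex.I_sq
  rw [scaledMeanRoot]
  linear_combination hlead

lemma scaledMeanRoot_mul_halfGap :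
    scaledMeanRoot k₁ q * halfGap p k₁ q = Complex.I * p * π * scaledEigenvalue p k₁ q := by
  rw [halfGap, scaledEigenvalue]
  ring

namespace IsRegular

lemma eigenvalueRatio_sq (h : IsRegular p k₁ q) :
    eigenvalueRatio p k₁ q ^ 2 * (scaledMeanRoot k₁ q ^ 2 + (p * π * q.1) ^ 2) =
      scaledMeanRoot k₁ q ^ 2 := by
  have hsq : (eigenvalueRatio p k₁ q ^ 2)⁻¹ = 1 + (p * π * q.1 / scaledMeanRoot k₁ q) ^ 2 := by
    simp [eigenvalueRatio, Complex.cpow_ofNat_inv_pow]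
  have hσ := h.eigenvalueRatio_ne_zero
  have hM := h.scaledMeanRoot_ne_zero
  field_simp at hsq
  linear_combination -hsq

lemma eigenvalueRatio_eq (h : IsRegular p k₁ q) :
    eigenvalueRatio p k₁ q = 1 + q.1 ^ 2 * eigenvalueRatioOffset p k₁ q := by
  have hM := h.scaledMeanRoot_ne_zero
  have hσ := h.eigenvalueRatio_add_one_ne_zero
  rw [eigenvalueRatioOffset]
  field_simp
  linear_combination h.eigenvalueRatio_sq

lemma halfGap_eq (h : IsRegular p k₁ q) :
    halfGap p k₁ q = p * (π * Complex.I) + q.1 ^ 2 * halfGapOffset p k₁ q := by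
  rw [halfGap, h.eigenvalueRatio_eq, halfGapOffset]
  ring

lemma scaledEigenvalue_sq (h : IsRegular p k₁ q) :
    scaledEigenvalue p k₁ q ^ 2 = scaledMeanRoot k₁ q ^ 2 + (q.1 * halfGap p k₁ q) ^ 2 := by
  rw [scaledEigenvalue, halfGap]
  linear_combination
    h.eigenvalueRatio_sq - (q.1 * p * π * eigenvalueRatio p k₁ q) ^ 2 * Complex.I_sq

lemma scaledEigenvalue_eq (h : IsRegular p k₁ q) :
    scaledEigenvalue p k₁ q =
      Complex.I * π + q.1 ^ 2 * (Complex.I * (2 * k₁ + p ^ 2 * π ^ 2) / (2 * π)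
        + q.1 * (q.2 + q.1 * expansionRemainder p k₁ q)) := by
  have hπ : (π : ℂ) ≠ 0 := Complex.ofReal_ne_zero.2 pi_ne_zero
  have hM := h.scaledMeanRoot_ne_zero
  have hσ := h.eigenvalueRatio_add_one_ne_zero
  have hratio : scaledMeanRoot k₁ q * eigenvalueRatioOffset p k₁ q =
      Complex.I * p ^ 2 * π / 2 + q.1 ^ 2 * expansionRemainder p k₁ q := by
    rw [eigenvalueRatioOffset, expansionRemainder]
    field_simp
    linear_combination
      -p ^ 2 * (eigenvalueRatio p k₁ q + 1) *
        (Complex.I * scaledMeanRoot.eq_1 k₁ q + π * Complex.I_sq)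
      - p ^ 2 * π * (2 * eigenvalueRatio p k₁ q + 1) * h.eigenvalueRatio_eq
  have hsplit : scaledEigenvalue p k₁ q =
      scaledMeanRoot k₁ q
        + q.1 ^ 2 * (scaledMeanRoot k₁ q * eigenvalueRatioOffset p k₁ q) := by
    rw [scaledEigenvalue]
    linear_combination scaledMeanRoot k₁ q * h.eigenvalueRatio_eq
  rw [hsplit, hratio, scaledMeanRoot, meanRootOffset]
  field_simp
  ring

lemma scaledBoundaryMatrix_eq (h : IsRegular p k₁ q) (hε : q.1 ≠ 0) :
    scaledBoundaryMatrix p k₁ k₂ k₄ q = Matrix.diagonal ![1, q.1] *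
      boundaryMatrix k₁ k₂ k₁ k₄ (scaledEigenvalue p k₁ q / q.1) (scaledMeanRoot k₁ q / q.1)
        (halfGap p k₁ q)
        (Complex.cosh (q.1 * meanRootOffset k₁ q)) (Complex.sinh (q.1 * meanRootOffset k₁ q))
        (Complex.cosh (q.1 ^ 2 * halfGapOffset p k₁ q))
        (Complex.sinh (q.1 ^ 2 * halfGapOffset p k₁ q)) := by
  have hsq := h.scaledEigenvalue_sq
  have hMV := scaledMeanRoot_mul_meanRootOffset (k₁ := k₁) (q := q)
  have hcosh := sinhc_add_mul_deriv_sinhc (q.1 * meanRootOffset k₁ q)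
  rw [← mul_sinhc, ← mul_sinhc]
  simp only [← Matrix.ext_iff, Fin.forall_fin_two, Matrix.diagonal_mul, scaledBoundaryMatrix,
    boundaryMatrix, Matrix.of_apply, Matrix.cons_val]
  refine ⟨⟨?_, ?_⟩, ?_, ?_⟩ <;> field_simp
  · linear_combination
      scaledEigenvalue p k₁ q * Complex.cosh (q.1 ^ 2 * halfGapOffset p k₁ q) *
        (k₁ * hcosh - sinhc (q.1 * meanRootOffset k₁ q) * hMV)
  · linear_combination
      scaledEigenvalue p k₁ q ^ 2 * Complex.cosh (q.1 ^ 2 * halfGapOffset p k₁ q) *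
        (k₁ * hcosh - sinhc (q.1 * meanRootOffset k₁ q) * hMV)
      + k₁ * Complex.cosh (q.1 * meanRootOffset k₁ q) *
        Complex.cosh (q.1 ^ 2 * halfGapOffset p k₁ q) * hsq

end IsRegular

theorem isDissipativeEigenvalue_scaledEigenvalue_div {p : ℕ} {k₁ k₂ k₄ : ℝ} {k : ℤ} (hp : p ≠ 0)
    (hk : k * q.1 = 1) (h : IsRegular p k₁ q)
    (hdet : (scaledBoundaryMatrix p k₁ k₂ k₄ q).det = 0) :
    IsDissipativeEigenvalue (4 * (p : ℝ) ^ 2 * π ^ 2) k₁ k₂ k₁ k₄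
      (scaledEigenvalue p k₁ q / q.1) := by
  have hε : q.1 ≠ 0 := right_ne_zero_of_mul_eq_one hk
  have hm : scaledMeanRoot k₁ q / q.1 =
      k * (π * Complex.I) + q.1 * meanRootOffset k₁ q := by
    rw [scaledMeanRoot]
    field_simp
    linear_combination -Complex.I * π * hk
  have hδ : halfGap p k₁ q =
      (p : ℤ) * (π * Complex.I) + q.1 ^ 2 * halfGapOffset p k₁ q := by
    rw [h.halfGap_eq, Int.cast_natCast]
  refine isDissipativeEigenvalue_of_det_boundaryMatrix_eq_zero (β := 2 * p * π)
    (m := scaledMeanRoot k₁ q / q.1) (δ := halfGap p k₁ q) ?_ ?_ ?_ ?_ ?_ ?_ ?_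
  · push_cast
    ring
  · simp [hp, pi_ne_zero]
  · exact div_ne_zero (mul_ne_zero h.scaledMeanRoot_ne_zero h.eigenvalueRatio_ne_zero) hε
  · refine ne_of_eq_of_ne ?_ (div_ne_zero h.sq_sub_sq_ne_zero (pow_ne_zero 2 hε))
    field_simp
  · rw [div_pow, div_pow, h.scaledEigenvalue_sq]
    field_simp
  · linear_combination 2 / q.1 * scaledMeanRoot_mul_halfGap (p := p) (k₁ := k₁) (q := q)
  · rw [h.scaledBoundaryMatrix_eq hε, Matrix.det_mul, Matrix.det_diagonal, Fin.prod_univ_two]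
      at hdet
    have hcoshm := hm ▸ cosh_int_mul_pi_mul_I_add k (q.1 * meanRootOffset k₁ q)
    have hsinhm := hm ▸ sinh_int_mul_pi_mul_I_add k (q.1 * meanRootOffset k₁ q)
    have hcoshδ := hδ ▸ cosh_int_mul_pi_mul_I_add p (q.1 ^ 2 * halfGapOffset p k₁ q)
    have hsinhδ := hδ ▸ sinh_int_mul_pi_mul_I_add p (q.1 ^ 2 * halfGapOffset p k₁ q)
    rw [hcoshm, hsinhm, hcoshδ, hsinhδ, boundaryMatrix_mul_mul, Matrix.det_smul,
      (mul_eq_zero.1 hdet).resolve_left (by simpa using hε), mul_zero]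

end Scaling

section Analyticity

variable (p k₁ k₂ k₄ ω : ℂ)

attribute [local fun_prop] analyticAt_fst analyticAt_snd

@[fun_prop]
lemma analyticAt_meanRootOffset (q : ℂ × ℂ) : AnalyticAt ℂ (meanRootOffset k₁) q := by
  unfold meanRootOffset
  fun_prop

@[fun_prop]
lemma analyticAt_scaledMeanRoot (q : ℂ × ℂ) : AnalyticAt ℂ (scaledMeanRoot k₁) q := by
  unfold scaledMeanRoot
  fun_prop

lemma scaledMeanRoot_zero : scaledMeanRoot k₁ (0, ω) = Complex.I * π := by
  simp [scaledMeanRoot]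

lemma scaledMeanRoot_zero_ne_zero : scaledMeanRoot k₁ (0, ω) ≠ 0 := by
  simp [scaledMeanRoot_zero, pi_ne_zero]

lemma eigenvalueRatio_zero : eigenvalueRatio p k₁ (0, ω) = 1 := by
  simp [eigenvalueRatio]

lemma eigenvalueRatio_zero_add_one_ne_zero : eigenvalueRatio p k₁ (0, ω) + 1 ≠ 0 := by
  norm_num [eigenvalueRatio_zero]

@[fun_prop]
lemma analyticAt_eigenvalueRatio : AnalyticAt ℂ (eigenvalueRatio p k₁) (0, ω) := by
  unfold eigenvalueRatio
  have hM := scaledMeanRoot_zero_ne_zero k₁ ω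
  refine AnalyticAt.inv (AnalyticAt.cpow ?_ analyticAt_const ?_) (by simp)
  · fun_prop (disch := assumption)
  · simp

@[fun_prop]
lemma analyticAt_halfGap : AnalyticAt ℂ (halfGap p k₁) (0, ω) := by
  unfold halfGap
  fun_prop

@[fun_prop]
lemma analyticAt_scaledEigenvalue : AnalyticAt ℂ (scaledEigenvalue p k₁) (0, ω) := by
  unfold scaledEigenvalue
  fun_prop

@[fun_prop]
lemma analyticAt_eigenvalueRatioOffset :
    AnalyticAt ℂ (eigenvalueRatioOffset p k₁) (0, ω) := by
  unfold eigenvalueRatioOffset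
  have hM := scaledMeanRoot_zero_ne_zero k₁ ω
  have hσ := eigenvalueRatio_zero_add_one_ne_zero p k₁ ω
  fun_prop (disch := assumption)

@[fun_prop]
lemma analyticAt_halfGapOffset : AnalyticAt ℂ (halfGapOffset p k₁) (0, ω) := by
  unfold halfGapOffset
  fun_prop

lemma analyticAt_expansionRemainder : AnalyticAt ℂ (expansionRemainder p k₁) (0, ω) := by
  unfold expansionRemainder
  have hden : 2 * scaledMeanRoot k₁ (0, ω) * (eigenvalueRatio p k₁ (0, ω) + 1) ≠ 0 :=
    mul_ne_zero (mul_ne_zero two_ne_zero (scaledMeanRoot_zero_ne_zero k₁ ω))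
      (eigenvalueRatio_zero_add_one_ne_zero p k₁ ω)
  fun_prop (disch := assumption)

lemma analyticAt_det_scaledBoundaryMatrix :
    AnalyticAt ℂ (fun q => (scaledBoundaryMatrix p k₁ k₂ k₄ q).det) (0, ω) := by
  simp only [scaledBoundaryMatrix, Matrix.det_fin_two_of]
  fun_prop

lemma eventually_isRegular : ∀ᶠ q in nhds (0, ω), IsRegular p k₁ q := by
  have hM := scaledMeanRoot_zero_ne_zero k₁ ω
  have hσ := (analyticAt_eigenvalueRatio p k₁ ω).continuousAt
  have hdiff : ContinuousAt (fun q => scaledMeanRoot k₁ q ^ 2 - (q.1 * halfGap p k₁ q) ^ 2)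
      (0, ω) :=
    AnalyticAt.continuousAt (𝕜 := ℂ) (by fun_prop)
  have hdiff₀ : scaledMeanRoot k₁ (0, ω) ^ 2 - (0 * halfGap p k₁ (0, ω)) ^ 2 ≠ 0 := by
    simp [hM]
  filter_upwards [(analyticAt_scaledMeanRoot k₁ (0, ω)).continuousAt.eventually_ne hM,
    hσ.eventually_ne (eigenvalueRatio_zero p k₁ ω ▸ one_ne_zero),
    (hσ.add_const 1).eventually_ne (eigenvalueRatio_zero_add_one_ne_zero p k₁ ω),
    hdiff.eventually_ne hdiff₀] with q hMq hσq hσq' hdiffq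
  exact ⟨hMq, hσq, hσq', hdiffq⟩

lemma det_scaledBoundaryMatrix_zero :
    (scaledBoundaryMatrix p k₁ k₂ k₄ (0, ω)).det =
      Complex.I * π * (π ^ 2 * ω + k₁ * k₂) * (π ^ 2 * ω + k₁ * k₄) := by
  have hπ : (π : ℂ) ≠ 0 := Complex.ofReal_ne_zero.2 pi_ne_zero
  simp only [scaledBoundaryMatrix, Matrix.det_fin_two_of, scaledEigenvalue, meanRootOffset,
    scaledMeanRoot_zero, eigenvalueRatio_zero, zero_pow two_ne_zero, zero_mul, mul_zero,
    mul_one, add_zero, sub_zero, Complex.cosh_zero, sinhc_zero, deriv_sinhc_zero]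
  field_simp
  rw [Complex.I_pow_four]
  ring

lemma hasDerivAt_det_scaledBoundaryMatrix_zero :
    HasDerivAt (fun w => (scaledBoundaryMatrix p k₁ k₂ k₄ (0, w)).det)
      (Complex.I * π ^ 3 * (2 * π ^ 2 * ω + k₁ * k₂ + k₁ * k₄)) ω := by
  simp only [det_scaledBoundaryMatrix_zero]
  have hlin (c : ℂ) : HasDerivAt (fun w : ℂ => (π : ℂ) ^ 2 * w + c) (π ^ 2) ω := by
    simpa using ((hasDerivAt_id ω).const_mul ((π : ℂ) ^ 2)).add_const c
  exact (((hlin (k₁ * k₂)).const_mul _).mul (hlin (k₁ * k₄))).congr_deriv (by ring)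

end Analyticity

section Branches

/-- `k²` times the error of the two-term approximation `ikπ + i(2k₁ + p²π²) / (2kπ)` of the
eigenvalues `lam k`; its limit is the coefficient of `1/k²` in their expansion. -/
def secondOrderError (p : ℕ) (k₁ : ℝ) (lam : ℤ → ℂ) (k : ℤ) : ℂ :=
  (k : ℂ) ^ 2 * (lam k - Complex.I * (k : ℂ) * (π : ℂ)
    - Complex.I * (((2 * k₁ + (p : ℝ) ^ 2 * π ^ 2) : ℝ) : ℂ) / (2 * (k : ℂ) * (π : ℂ)))

lemma IsRegular.secondOrderError_eq {p : ℕ} {k₁ : ℝ} {lam : ℤ → ℂ} {k : ℤ} {q : ℂ × ℂ}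
    (h : IsRegular p k₁ q) (hk : k * q.1 = 1) (hlam : lam k = scaledEigenvalue p k₁ q / q.1) :
    secondOrderError p k₁ lam k = q.2 + q.1 * expansionRemainder p k₁ q := by
  have hπ : (π : ℂ) ≠ 0 := Complex.ofReal_ne_zero.2 pi_ne_zero
  have hε : q.1 ≠ 0 := right_ne_zero_of_mul_eq_one hk
  rw [secondOrderError, hlam, h.scaledEigenvalue_eq, eq_inv_of_mul_eq_one_left hk]
  push_cast
  field_simp
  ring

theorem exists_eigenvalue_branch_of_simple_root {p : ℕ} {k₁ k₂ k₄ : ℝ} {ω₀ : ℂ} (hp : p ≠ 0)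
    (hroot : (π ^ 2 * ω₀ + k₁ * k₂) * (π ^ 2 * ω₀ + k₁ * k₄) = 0)
    (hsimple : 2 * π ^ 2 * ω₀ + k₁ * k₂ + k₁ * k₄ ≠ 0) :
    ∃ lam : ℤ → ℂ,
      (∀ᶠ k in cocompact ℤ,
        IsDissipativeEigenvalue (4 * (p : ℝ) ^ 2 * π ^ 2) k₁ k₂ k₁ k₄ (lam k)) ∧
      Tendsto (secondOrderError p k₁ lam) (cocompact ℤ) (nhds ω₀) := by
  obtain ⟨φ, hφ, hdet⟩ := exists_tendsto_eventually_eq_zero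
    (analyticAt_det_scaledBoundaryMatrix p k₁ k₂ k₄ ω₀).hasStrictFDerivAt
    (by rw [det_scaledBoundaryMatrix_zero, mul_assoc, hroot, mul_zero])
    (hasDerivAt_det_scaledBoundaryMatrix_zero p k₁ k₂ k₄ ω₀)
    (mul_ne_zero (by simp [pi_ne_zero]) hsimple)
  let q (k : ℤ) : ℂ × ℂ := ((k : ℂ)⁻¹, φ (k : ℂ)⁻¹)
  have hε := tendsto_inv_intCast_cocompact
  have hω : Tendsto (fun k => (q k).2) (cocompact ℤ) (nhds ω₀) := hφ.comp hε
  have hq : Tendsto q (cocompact ℤ) (nhds (0, ω₀)) := hε.prodMk_nhds hω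
  have hreg := hq.eventually (eventually_isRegular p k₁ ω₀)
  have hk : ∀ᶠ k : ℤ in cocompact ℤ, k * (q k).1 = 1 := by
    rw [cocompact_eq_cofinite]
    filter_upwards [eventually_cofinite_ne 0] with k hk
    exact mul_inv_cancel₀ (Int.cast_ne_zero.2 hk)
  refine ⟨fun k => scaledEigenvalue p k₁ (q k) / (q k).1, ?_, ?_⟩
  · filter_upwards [hk, hreg, hε.eventually hdet] with k hk hreg hdet
    exact isDissipativeEigenvalue_scaledEigenvalue_div hp hk hreg hdet
  · have hrem := (analyticAt_expansionRemainder p k₁ ω₀).continuousAt.tendsto.comp hq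
    have hlim := hω.add (hε.mul hrem)
    rw [zero_mul, add_zero] at hlim
    refine hlim.congr' ?_
    filter_upwards [hk, hreg] with k hk hreg
    exact (hreg.secondOrderError_eq hk rfl).symm

theorem exists_eigenvalue_branch {p : ℕ} {k₁ k₂ k₄ κ : ℝ} (hp : p ≠ 0) (hk₁ : k₁ ≠ 0)
    (hne : k₂ ≠ k₄) (hκ : κ = k₂ ∨ κ = k₄) :
    ∃ lam : ℤ → ℂ,
      (∀ᶠ k in cocompact ℤ,
        IsDissipativeEigenvalue (4 * (p : ℝ) ^ 2 * π ^ 2) k₁ k₂ k₁ k₄ (lam k)) ∧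
      Tendsto (secondOrderError p k₁ lam) (cocompact ℤ)
        (nhds (-((k₁ * κ / π ^ 2 : ℝ) : ℂ))) := by
  have hω : (π : ℂ) ^ 2 * -((k₁ * κ / π ^ 2 : ℝ) : ℂ) = -(k₁ * κ) := by
    have hπ : (π : ℂ) ≠ 0 := Complex.ofReal_ne_zero.2 pi_ne_zero
    push_cast
    field_simp
  have hgap : (k₁ * (k₄ - k₂) : ℂ) ≠ 0 := by
    exact_mod_cast mul_ne_zero hk₁ (sub_ne_zero.2 hne.symm)
  refine exists_eigenvalue_branch_of_simple_root hp ?_ ?_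
  · rw [hω]
    rcases hκ with rfl | rfl <;> ring
  · rw [mul_assoc, hω]
    rcases hκ with rfl | rfl
    · exact ne_of_eq_of_ne (by ring) hgap
    · exact ne_of_eq_of_ne (by ring) (neg_ne_zero.2 hgap)

end Branches

end

end Timoshenko

theorem exceptional_case_eigenvalue_expansion_general
    (p : ℕ) (hp : p ≠ 0) (k₁ k₂ k₄ : ℝ) (hk₁ : k₁ ≠ 0) (hne : k₂ ≠ k₄) :
    let b := 4 * (p : ℝ) ^ 2 * π ^ 2
    ∃ k₀ : ℤ, 1 ≤ k₀ ∧ ∃ lam₁ lam₂ : ℤ → ℂ,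
      (∀ k : ℤ, k₀ ≤ |k| →
          IsDissipativeEigenvalue b k₁ k₂ k₁ k₄ (lam₁ k) ∧
          IsDissipativeEigenvalue b k₁ k₂ k₁ k₄ (lam₂ k)) ∧
      Tendsto (fun k : ℤ =>
          (k : ℂ) ^ 2 * (lam₁ k - Complex.I * (k : ℂ) * (π : ℂ)
            - Complex.I * (((2 * k₁ + (p : ℝ) ^ 2 * π ^ 2) : ℝ) : ℂ)
              / (2 * (k : ℂ) * (π : ℂ))))
        (cocompact ℤ) (nhds (-(((k₁ * k₂ / π ^ 2 : ℝ)) : ℂ))) ∧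
      Tendsto (fun k : ℤ =>
          (k : ℂ) ^ 2 * (lam₂ k - Complex.I * (k : ℂ) * (π : ℂ)
            - Complex.I * (((2 * k₁ + (p : ℝ) ^ 2 * π ^ 2) : ℝ) : ℂ)
              / (2 * (k : ℂ) * (π : ℂ))))
        (cocompact ℤ) (nhds (-(((k₁ * k₄ / π ^ 2 : ℝ)) : ℂ))) := by
  obtain ⟨lam₁, heig₁, hlim₁⟩ :=
    Timoshenko.exists_eigenvalue_branch hp hk₁ hne (Or.inl rfl)
  obtain ⟨lam₂, heig₂, hlim₂⟩ :=
    Timoshenko.exists_eigenvalue_branch hp hk₁ hne (Or.inr rfl)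
  obtain ⟨k₀, hk₀, heig⟩ :=
    Timoshenko.exists_forall_le_abs_of_eventually_cocompact (heig₁.and heig₂)
  exact ⟨k₀, hk₀, lam₁, lam₂, heig, hlim₁, hlim₂⟩

/-- First exceptional case (`k₁ = k₃`, `k₂ ≠ k₄`, `b = 4p²π²`): asymptotic
expansions `λ_k^1 = ikπ + i(2k₁+p²π²)/(2kπ) − k₁k₂/(k²π²) + o(1/k²)` and
`λ_k^2 = ikπ + i(2k₁+p²π²)/(2kπ) − k₁k₄/(k²π²) + o(1/k²)`. -/
theorem exceptional_case_eigenvalue_expansion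
    (p : ℕ) (hp : 0 < p) (k₁ k₂ k₄ : ℝ) (hk₁ : 0 < k₁) (hk₂ : 0 < k₂)
    (hk₄ : 0 < k₄) (hne : k₂ ≠ k₄) :
    let b := 4 * (p : ℝ) ^ 2 * π ^ 2
    ∃ k₀ : ℤ, 1 ≤ k₀ ∧ ∃ lam₁ lam₂ : ℤ → ℂ,
      (∀ k : ℤ, k₀ ≤ |k| →
          IsDissipativeEigenvalue b k₁ k₂ k₁ k₄ (lam₁ k) ∧
          IsDissipativeEigenvalue b k₁ k₂ k₁ k₄ (lam₂ k)) ∧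
      Tendsto (fun k : ℤ =>
          (k : ℂ) ^ 2 * (lam₁ k - Complex.I * (k : ℂ) * (π : ℂ)
            - Complex.I * (((2 * k₁ + (p : ℝ) ^ 2 * π ^ 2) : ℝ) : ℂ)
              / (2 * (k : ℂ) * (π : ℂ))))
        (cocompact ℤ) (nhds (-(((k₁ * k₂ / π ^ 2 : ℝ)) : ℂ))) ∧
      Tendsto (fun k : ℤ =>
          (k : ℂ) ^ 2 * (lam₂ k - Complex.I * (k : ℂ) * (π : ℂ)
            - Complex.I * (((2 * k₁ + (p : ℝ) ^ 2 * π ^ 2) : ℝ) : ℂ)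
              / (2 * (k : ℂ) * (π : ℂ))))
        (cocompact ℤ) (nhds (-(((k₁ * k₄ / π ^ 2 : ℝ)) : ℂ))) :=
  exceptional_case_eigenvalue_expansion_general p hp.ne' k₁ k₂ k₄ hk₁.ne' hne
end

section
/- Let a, b, k₁, k₃ > 0 be real constants, let f₂, f₄ : [0,1] → ℂ be continuous, and let c₅, c₆ ∈ ℂ. Then there exists a unique pair (u, y) of twice continuously differentiable functions u, y : [0,1] → ℂ satisfying u(0) = y(0) = 0, u''(x) + y'(x) = f₂(x) and a·y''(x) − b·(u'(x) + y(x)) = f₄(x) for all x ∈ [0,1], together with −k₁·(u'(1) + y(1)) = c₅ and −k₃·y'(1) = c₆. -/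
open Set

/-!
The shear `φ = u' + y` decouples the system: the first equation becomes `φ' = f₂`, the second
`a y'' = f₄ + b φ`, and the conditions at the right end prescribe `φ` and `y'` there. So `φ`, `y'`,
`y` and `u` are obtained one after the other, each from its derivative and its value at one end.
-/

open scoped ContDiff in
theorem exists_contDiff_deriv_eq {E : Type*} [NormedAddCommGroup E] [NormedSpace ℝ E]
    [CompleteSpace E] {n : ℕ∞ω} (hn : n ≠ ω) {g : ℝ → E} (hg : ContDiff ℝ n g) (p : ℝ) (c : E) :
    ∃ G : ℝ → E, ContDiff ℝ (n + 1) G ∧ G p = c ∧ deriv G = g := by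
  have hasDerivAt_integral (x : ℝ) : HasDerivAt (fun x ↦ c + ∫ t in p..x, g t) (g x) x :=
    (hg.continuous.integral_hasStrictDerivAt p x).hasDerivAt.const_add c
  have deriv_integral : deriv (fun x ↦ c + ∫ t in p..x, g t) = g :=
    deriv_eq hasDerivAt_integral
  refine ⟨fun x ↦ c + ∫ t in p..x, g t, ?_, by simp, deriv_integral⟩
  rw [contDiff_succ_iff_deriv, deriv_integral]
  exact ⟨fun x ↦ (hasDerivAt_integral x).differentiableAt, fun hω ↦ absurd hω hn, hg⟩

theorem eqOn_of_eqOn_deriv {𝕜 E : Type*} [RCLike 𝕜] [NormedAddCommGroup E] [NormedSpace 𝕜 E]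
    {s : Set 𝕜} (hs : Convex ℝ s) {f g : 𝕜 → E} (hf : ∀ x ∈ s, DifferentiableAt 𝕜 f x)
    (hg : ∀ x ∈ s, DifferentiableAt 𝕜 g x) (hfg : EqOn (deriv f) (deriv g) s)
    {p : 𝕜} (hp : p ∈ s) (hfgp : f p = g p) : EqOn f g s := by
  intro x hx
  have deriv_bound : ∀ t ∈ s, ‖deriv (f - g) t‖ ≤ 0 := fun t ht ↦ by
    rw [deriv_sub (hf t ht) (hg t ht), hfg ht, sub_self, norm_zero]
  have sub_bound := hs.norm_image_sub_le_of_norm_deriv_le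
    (fun t ht ↦ (hf t ht).sub (hg t ht)) deriv_bound hp hx
  simpa [hfgp, sub_eq_zero] using sub_bound

section Timoshenko

variable {𝕜 E : Type*} [DivisionRing 𝕜] [NormedAddCommGroup E] [NormedSpace ℝ E] [Module 𝕜 E]
  {ℓ : ℝ} {a b k₁ k₃ : 𝕜} {f₂ f₄ : ℝ → E} {c₅ c₆ : E}

/-- The stationary Timoshenko system with loads `f₂`, `f₄` on a beam occupying `[0, ℓ]`, clamped at
`0` and with boundary data `c₅`, `c₆` at the tip `ℓ`; `u` is the deflection and `y` the
rotation angle, oriented so that `u' + y` is the shear. The derivatives at the ends are two-sided,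
so `u` and `y` are required to be `C²` on all of `ℝ`. -/
def IsTimoshenkoSolution_s17 (ℓ : ℝ) (a b k₁ k₃ : 𝕜) (f₂ f₄ : ℝ → E) (c₅ c₆ : E) (u y : ℝ → E) :
    Prop :=
  ContDiff ℝ 2 u ∧ ContDiff ℝ 2 y ∧ u 0 = 0 ∧ y 0 = 0 ∧
    (∀ x ∈ Icc (0 : ℝ) ℓ, deriv (deriv u) x + deriv y x = f₂ x) ∧
    (∀ x ∈ Icc (0 : ℝ) ℓ, a • deriv (deriv y) x - b • (deriv u x + y x) = f₄ x) ∧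
    -k₁ • (deriv u ℓ + y ℓ) = c₅ ∧ -k₃ • deriv y ℓ = c₆

theorem IsTimoshenkoSolution_s17.congr {g₂ g₄ u y : ℝ → E}
    (h : IsTimoshenkoSolution_s17 ℓ a b k₁ k₃ f₂ f₄ c₅ c₆ u y)
    (hfg₂ : EqOn f₂ g₂ (Icc 0 ℓ)) (hfg₄ : EqOn f₄ g₄ (Icc 0 ℓ)) :
    IsTimoshenkoSolution_s17 ℓ a b k₁ k₃ g₂ g₄ c₅ c₆ u y := by
  obtain ⟨hu, hy, hu₀, hy₀, force, moment, tip⟩ := h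
  exact ⟨hu, hy, hu₀, hy₀, fun x hx ↦ (force x hx).trans (hfg₂ hx),
    fun x hx ↦ (moment x hx).trans (hfg₄ hx), tip⟩

theorem exists_isTimoshenkoSolution_of_continuous [CompleteSpace E] [ContinuousConstSMul 𝕜 E]
    (ha : a ≠ 0) (hk₁ : k₁ ≠ 0) (hk₃ : k₃ ≠ 0) (hf₂ : Continuous f₂) (hf₄ : Continuous f₄) :
    ∃ u y, IsTimoshenkoSolution_s17 ℓ a b k₁ k₃ f₂ f₄ c₅ c₆ u y := by
  obtain ⟨φ, hφ, φ_tip, deriv_φ⟩ :=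
    exists_contDiff_deriv_eq (by simp) (contDiff_zero.2 hf₂) ℓ ((-k₁)⁻¹ • c₅)
  have curvature_continuous : Continuous fun x ↦ a⁻¹ • (f₄ x + b • φ x) :=
    (hf₄.add (hφ.continuous.const_smul b)).const_smul a⁻¹
  obtain ⟨z, hz, z_tip, deriv_z⟩ :=
    exists_contDiff_deriv_eq (by simp) (contDiff_zero.2 curvature_continuous) ℓ ((-k₃)⁻¹ • c₆)
  rw [zero_add] at hφ hz
  obtain ⟨y, hy, hy₀, deriv_y⟩ := exists_contDiff_deriv_eq (by simp) hz 0 0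
  rw [one_add_one_eq_two] at hy
  have slope_contDiff : ContDiff ℝ 1 (φ - y) := hφ.sub (hy.of_le one_le_two)
  obtain ⟨u, hu, hu₀, deriv_u⟩ := exists_contDiff_deriv_eq (by simp) slope_contDiff 0 0
  rw [one_add_one_eq_two] at hu
  have shear_eq (x : ℝ) : deriv u x + y x = φ x := by simp [deriv_u]
  refine ⟨u, y, hu, hy, hu₀, hy₀, fun x _ ↦ ?_, fun x _ ↦ ?_, ?_, ?_⟩
  · rw [deriv_u, deriv_sub (hφ.differentiable one_ne_zero x) (hy.differentiable two_ne_zero x),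
      sub_add_cancel, deriv_φ]
  · rw [shear_eq, deriv_y, deriv_z, smul_inv_smul₀ ha, add_sub_cancel_right]
  · rw [shear_eq, φ_tip, smul_inv_smul₀ (neg_ne_zero.2 hk₁)]
  · rw [deriv_y, z_tip, smul_inv_smul₀ (neg_ne_zero.2 hk₃)]

theorem exists_isTimoshenkoSolution [CompleteSpace E] [ContinuousConstSMul 𝕜 E] (hℓ : 0 ≤ ℓ)
    (ha : a ≠ 0) (hk₁ : k₁ ≠ 0) (hk₃ : k₃ ≠ 0)
    (hf₂ : ContinuousOn f₂ (Icc 0 ℓ)) (hf₄ : ContinuousOn f₄ (Icc 0 ℓ)) :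
    ∃ u y, IsTimoshenkoSolution_s17 ℓ a b k₁ k₃ f₂ f₄ c₅ c₆ u y := by
  have hg₂ := hf₂.domRestrict.Icc_extend' (h := hℓ)
  have hg₄ := hf₄.domRestrict.Icc_extend' (h := hℓ)
  obtain ⟨u, y, h⟩ := exists_isTimoshenkoSolution_of_continuous ha hk₁ hk₃ hg₂ hg₄
  exact ⟨u, y, h.congr (fun x hx ↦ IccExtend_of_mem hℓ _ hx) (fun x hx ↦ IccExtend_of_mem hℓ _ hx)⟩

theorem IsTimoshenkoSolution_s17.eqOn_shear (hℓ : 0 ≤ ℓ) (hk₁ : k₁ ≠ 0) {u₁ y₁ u₂ y₂ : ℝ → E}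
    (h₁ : IsTimoshenkoSolution_s17 ℓ a b k₁ k₃ f₂ f₄ c₅ c₆ u₁ y₁)
    (h₂ : IsTimoshenkoSolution_s17 ℓ a b k₁ k₃ f₂ f₄ c₅ c₆ u₂ y₂) :
    EqOn (deriv u₁ + y₁) (deriv u₂ + y₂) (Icc 0 ℓ) := by
  obtain ⟨hu₁, hy₁, -, -, force₁, -, shear_tip₁, -⟩ := h₁
  obtain ⟨hu₂, hy₂, -, -, force₂, -, shear_tip₂, -⟩ := h₂
  have du₁ := hu₁.differentiable_deriv_two
  have du₂ := hu₂.differentiable_deriv_two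
  have dy₁ := hy₁.differentiable two_ne_zero
  have dy₂ := hy₂.differentiable two_ne_zero
  refine eqOn_of_eqOn_deriv (convex_Icc 0 ℓ) (fun x _ ↦ (du₁ x).add (dy₁ x))
    (fun x _ ↦ (du₂ x).add (dy₂ x)) (fun x hx ↦ ?_) (right_mem_Icc.2 hℓ)
    (smul_right_injective E (neg_ne_zero.2 hk₁) (shear_tip₁.trans shear_tip₂.symm))
  rw [deriv_add (du₁ x) (dy₁ x), deriv_add (du₂ x) (dy₂ x), force₁ x hx, force₂ x hx]

theorem IsTimoshenkoSolution_s17.eqOn_deriv_rotation (hℓ : 0 ≤ ℓ) (ha : a ≠ 0) (hk₁ : k₁ ≠ 0)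
    (hk₃ : k₃ ≠ 0) {u₁ y₁ u₂ y₂ : ℝ → E}
    (h₁ : IsTimoshenkoSolution_s17 ℓ a b k₁ k₃ f₂ f₄ c₅ c₆ u₁ y₁)
    (h₂ : IsTimoshenkoSolution_s17 ℓ a b k₁ k₃ f₂ f₄ c₅ c₆ u₂ y₂) :
    EqOn (deriv y₁) (deriv y₂) (Icc 0 ℓ) := by
  have shear_eq := h₁.eqOn_shear hℓ hk₁ h₂
  obtain ⟨-, hy₁, -, -, -, moment₁, -, bending_tip₁⟩ := h₁
  obtain ⟨-, hy₂, -, -, -, moment₂, -, bending_tip₂⟩ := h₂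
  refine eqOn_of_eqOn_deriv (convex_Icc 0 ℓ) (fun x _ ↦ hy₁.differentiable_deriv_two x)
    (fun x _ ↦ hy₂.differentiable_deriv_two x) (fun x hx ↦ ?_) (right_mem_Icc.2 hℓ)
    (smul_right_injective E (neg_ne_zero.2 hk₃) (bending_tip₁.trans bending_tip₂.symm))
  have same_load := (moment₁ x hx).trans (moment₂ x hx).symm
  rw [show deriv u₁ x + y₁ x = deriv u₂ x + y₂ x from shear_eq hx] at same_load
  exact smul_right_injective E ha (sub_left_injective same_load)

theorem IsTimoshenkoSolution_s17.eqOn (hℓ : 0 ≤ ℓ) (ha : a ≠ 0) (hk₁ : k₁ ≠ 0) (hk₃ : k₃ ≠ 0)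
    {u₁ y₁ u₂ y₂ : ℝ → E} (h₁ : IsTimoshenkoSolution_s17 ℓ a b k₁ k₃ f₂ f₄ c₅ c₆ u₁ y₁)
    (h₂ : IsTimoshenkoSolution_s17 ℓ a b k₁ k₃ f₂ f₄ c₅ c₆ u₂ y₂) :
    EqOn u₁ u₂ (Icc 0 ℓ) ∧ EqOn y₁ y₂ (Icc 0 ℓ) := by
  have shear_eq := h₁.eqOn_shear hℓ hk₁ h₂
  have deriv_y_eq := h₁.eqOn_deriv_rotation hℓ ha hk₁ hk₃ h₂
  obtain ⟨hu₁, hy₁, u₁_zero, y₁_zero, -⟩ := h₁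
  obtain ⟨hu₂, hy₂, u₂_zero, y₂_zero, -⟩ := h₂
  have y_eq : EqOn y₁ y₂ (Icc 0 ℓ) :=
    eqOn_of_eqOn_deriv (convex_Icc 0 ℓ) (fun x _ ↦ hy₁.differentiable two_ne_zero x)
      (fun x _ ↦ hy₂.differentiable two_ne_zero x) deriv_y_eq (left_mem_Icc.2 hℓ)
      (y₁_zero.trans y₂_zero.symm)
  have deriv_u_eq : EqOn (deriv u₁) (deriv u₂) (Icc 0 ℓ) := fun x hx ↦ by
    simpa [y_eq hx] using shear_eq hx
  have u_eq : EqOn u₁ u₂ (Icc 0 ℓ) :=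
    eqOn_of_eqOn_deriv (convex_Icc 0 ℓ) (fun x _ ↦ hu₁.differentiable two_ne_zero x)
      (fun x _ ↦ hu₂.differentiable two_ne_zero x) deriv_u_eq (left_mem_Icc.2 hℓ)
      (u₁_zero.trans u₂_zero.symm)
  exact ⟨u_eq, y_eq⟩

theorem maximality_bvp_general [CompleteSpace E] [ContinuousConstSMul 𝕜 E] (hℓ : 0 ≤ ℓ)
    (ha : a ≠ 0) (hk₁ : k₁ ≠ 0) (hk₃ : k₃ ≠ 0)
    (hf₂ : ContinuousOn f₂ (Icc 0 ℓ)) (hf₄ : ContinuousOn f₄ (Icc 0 ℓ)) :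
    (∃ u y, IsTimoshenkoSolution_s17 ℓ a b k₁ k₃ f₂ f₄ c₅ c₆ u y) ∧
      ∀ u₁ y₁ u₂ y₂, IsTimoshenkoSolution_s17 ℓ a b k₁ k₃ f₂ f₄ c₅ c₆ u₁ y₁ →
        IsTimoshenkoSolution_s17 ℓ a b k₁ k₃ f₂ f₄ c₅ c₆ u₂ y₂ →
        ∀ x ∈ Icc 0 ℓ, u₁ x = u₂ x ∧ y₁ x = y₂ x := by
  refine ⟨exists_isTimoshenkoSolution hℓ ha hk₁ hk₃ hf₂ hf₄, fun u₁ y₁ u₂ y₂ h₁ h₂ x hx ↦ ?_⟩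
  obtain ⟨u_eq, y_eq⟩ := h₁.eqOn hℓ ha hk₁ hk₃ h₂
  exact ⟨u_eq hx, y_eq hx⟩

end Timoshenko

/-- The boundary value problem solved in the proof that the Timoshenko generator
`𝒜` is maximal: existence and uniqueness (on `[0,1]`) of a solution pair. -/
theorem maximality_bvp
    (a b k₁ k₃ : ℝ) (ha : 0 < a) (hb : 0 < b) (hk₁ : 0 < k₁) (hk₃ : 0 < k₃)
    (f₂ f₄ : ℝ → ℂ) (hf₂ : Continuous f₂) (hf₄ : Continuous f₄)
    (c₅ c₆ : ℂ) :
    (∃ u y : ℝ → ℂ,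
      ContDiff ℝ 2 u ∧ ContDiff ℝ 2 y ∧ u 0 = 0 ∧ y 0 = 0 ∧
      (∀ x ∈ Icc (0:ℝ) 1, deriv (deriv u) x + deriv y x = f₂ x) ∧
      (∀ x ∈ Icc (0:ℝ) 1,
        (a : ℂ) * deriv (deriv y) x - (b : ℂ) * (deriv u x + y x) = f₄ x) ∧
      -(k₁ : ℂ) * (deriv u 1 + y 1) = c₅ ∧
      -(k₃ : ℂ) * deriv y 1 = c₆) ∧
    (∀ u y u' y' : ℝ → ℂ,
      (ContDiff ℝ 2 u ∧ ContDiff ℝ 2 y ∧ u 0 = 0 ∧ y 0 = 0 ∧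
        (∀ x ∈ Icc (0:ℝ) 1, deriv (deriv u) x + deriv y x = f₂ x) ∧
        (∀ x ∈ Icc (0:ℝ) 1,
          (a : ℂ) * deriv (deriv y) x - (b : ℂ) * (deriv u x + y x) = f₄ x) ∧
        -(k₁ : ℂ) * (deriv u 1 + y 1) = c₅ ∧
        -(k₃ : ℂ) * deriv y 1 = c₆) →
      (ContDiff ℝ 2 u' ∧ ContDiff ℝ 2 y' ∧ u' 0 = 0 ∧ y' 0 = 0 ∧
        (∀ x ∈ Icc (0:ℝ) 1, deriv (deriv u') x + deriv y' x = f₂ x) ∧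
        (∀ x ∈ Icc (0:ℝ) 1,
          (a : ℂ) * deriv (deriv y') x - (b : ℂ) * (deriv u' x + y' x) = f₄ x) ∧
        -(k₁ : ℂ) * (deriv u' 1 + y' 1) = c₅ ∧
        -(k₃ : ℂ) * deriv y' 1 = c₆) →
      ∀ x ∈ Icc (0:ℝ) 1, u x = u' x ∧ y x = y' x) :=
  maximality_bvp_general zero_le_one (Complex.ofReal_ne_zero.2 ha.ne')
    (Complex.ofReal_ne_zero.2 hk₁.ne') (Complex.ofReal_ne_zero.2 hk₃.ne')
    hf₂.continuousOn hf₄.continuousOn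
end
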